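/- arXiv:1907.01373 — 4 statements merged into one kernel-verified Lean document; each statement's English description precedes it below -/
import Mathlib

section
/- Let 0<s<1 and 1<p<∞ satisfy sp>1. There is a constant C depending only on s and p such that for every open interval I ⊆ ℝ and every continuous function f : I → ℝ one has the reverse oscillation inequality ∫_I∫_I (osc_{[x,y]} f)^p / |y-x|^{1+sp} dx dy ≤ C ∫_I∫_I |f(y)-f(x)|^p / |y-x|^{1+sp} dx dy. -/
open MeasureTheory Set ENNReal

/-- The oscillation of `f` on the set `A`, valued in `ℝ≥0∞`. -/
noncomputable def oscE (f : ℝ → ℝ) (A : Set ℝ) : ℝ≥0∞ :=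
  ⨆ z ∈ A, ⨆ t ∈ A, edist (f z) (f t)

/-!
Put `γ = (sp - 1) / 2`, so that `1 + sp = 2 + 2γ`. The averages of `f` over the intervals
`z + 2⁻ⁿ([x, y] - z)` converge to `f z`, and Jensen's inequality bounds the difference of two
successive ones by a geometrically decaying multiple of the energy of `f` on `[x, y]`. This gives
the Morrey estimate
`(osc_{[x,y]} f)^p ≲ |x - y|^γ ∫_{[x,y]} ∫_{[x,y]} |f(u) - f(v)|^p / |u - v|^(2 + γ)`.
It spends only one of the two available powers `γ`. After dividing by `|x - y|^(2 + 2γ)` and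
exchanging the integrals, the other one makes the kernel integrable over the pairs `(x, y)`
enclosing `u` and `v`:
`∫∫_{u, v ∈ [x,y]} |x - y|^(-(2 + γ)) ≲ |u - v|^(-γ)`.
-/

open Filter Metric Topology

universe u

section Averages

variable {X Y E : Type*} [MeasurableSpace X] [MeasurableSpace Y] [PseudoEMetricSpace E]

lemma rpow_laverage_le_laverage_rpow {p : ℝ} (hp : 1 ≤ p) (μ : Measure X) [IsFiniteMeasure μ]
    [NeZero μ] {g : X → ℝ≥0∞} (hg : AEMeasurable g μ) :
    (⨍⁻ x, g x ∂μ) ^ p ≤ ⨍⁻ x, g x ^ p ∂μ := by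
  have h := eLpNorm'_le_eLpNorm'_of_exponent_le one_pos hp ((μ univ)⁻¹ • μ)
    (hg.smul_measure (μ univ)⁻¹).aestronglyMeasurable
  simp only [eLpNorm', enorm_eq_self, rpow_one, one_div] at h
  rwa [inv_one, rpow_one, ENNReal.le_rpow_inv_iff (by positivity)] at h

lemma rpow_laverage_laverage_le_laverage_laverage_rpow {p : ℝ} (hp : 1 ≤ p) {μ : Measure X}
    {ν : Measure Y} [IsFiniteMeasure μ] [NeZero μ] [IsFiniteMeasure ν] [NeZero ν]
    {g : X → Y → ℝ≥0∞} (hg : AEMeasurable (Function.uncurry g) (μ.prod ν)) :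
    (⨍⁻ x, ⨍⁻ y, g x y ∂ν ∂μ) ^ p ≤ ⨍⁻ x, ⨍⁻ y, g x y ^ p ∂ν ∂μ := by
  have hgx : AEMeasurable (fun x ↦ ⨍⁻ y, g x y ∂ν) μ := by
    simp only [laverage_eq]
    exact hg.lintegral_prod_right'.div_const _
  refine (rpow_laverage_le_laverage_rpow hp μ hgx).trans (laverage_mono_ae ?_)
  filter_upwards [hg.aestronglyMeasurable.prodMk_left] with x hx
  exact rpow_laverage_le_laverage_rpow hp ν hx.aemeasurable

lemma edist_le_laverage_edist_add (μ : Measure X) [IsFiniteMeasure μ] [NeZero μ] {f : X → E}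
    {a : E} (hf : AEMeasurable (fun x ↦ edist a (f x)) μ) (b : E) :
    edist a b ≤ (⨍⁻ x, edist a (f x) ∂μ) + ⨍⁻ x, edist b (f x) ∂μ :=
  calc edist a b = ⨍⁻ _, edist a b ∂μ := (laverage_const μ _).symm
    _ ≤ ⨍⁻ x, (edist a (f x) + edist b (f x)) ∂μ :=
      lintegral_mono fun _ ↦ edist_triangle_right _ _ _
    _ = _ := lintegral_add_left' (hf.smul_measure _) _

lemma laverage_edist_le_add (μ : Measure Y) (ν : Measure X) [IsFiniteMeasure μ] [NeZero μ]
    [IsFiniteMeasure ν] [NeZero ν] {f : X → E} {c : E}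
    (hf : AEMeasurable (fun x ↦ edist c (f x)) ν) (g : Y → E) :
    ⨍⁻ y, edist c (g y) ∂μ ≤
      (⨍⁻ x, edist c (f x) ∂ν) + ⨍⁻ y, ⨍⁻ x, edist (g y) (f x) ∂ν ∂μ :=
  calc ⨍⁻ y, edist c (g y) ∂μ
      ≤ ⨍⁻ y, ((⨍⁻ x, edist c (f x) ∂ν) + ⨍⁻ x, edist (g y) (f x) ∂ν) ∂μ :=
        lintegral_mono fun y ↦ edist_le_laverage_edist_add ν hf (g y)
    _ = (⨍⁻ _, ⨍⁻ x, edist c (f x) ∂ν ∂μ) + ⨍⁻ y, ⨍⁻ x, edist (g y) (f x) ∂ν ∂μ :=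
        lintegral_add_left measurable_const _
    _ = _ := by rw [laverage_const]

lemma tendsto_setLAverage_zero {ι : Type*} {l : Filter ι} {l' : Filter X} {μ : Measure X}
    {S : ι → Set X} {g : X → ℝ≥0∞} (hS : Tendsto S l l'.smallSets)
    (hSm : ∀ i, MeasurableSet (S i)) (hg : Tendsto g l' (𝓝 0)) :
    Tendsto (fun i ↦ ⨍⁻ x in S i, g x ∂μ) l (𝓝 0) := by
  refine ENNReal.tendsto_nhds_zero.2 fun ε hε ↦ ?_
  filter_upwards [tendsto_smallSets_iff.1 hS _ (ENNReal.tendsto_nhds_zero.1 hg ε hε)] with i hi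
  exact (laverage_le_essSup _).trans
    (essSup_le_of_ae_le ε (ae_restrict_of_forall_mem (hSm i) hi))

end Averages

section Measurability

variable {X E : Type*} [TopologicalSpace X] [MeasurableSpace X] [OpensMeasurableSpace X]
  [PseudoEMetricSpace E] {f : X → E} {S T : Set X}

lemma aemeasurable_edist_const_left (hf : ContinuousOn f S) (hS : MeasurableSet S) (c : E)
    (μ : Measure X) : AEMeasurable (fun u ↦ edist c (f u)) (μ.restrict S) :=
  (continuous_edist.comp_continuousOn (continuousOn_const.prodMk hf)).aemeasurable hS

lemma aemeasurable_edist_prod [SecondCountableTopology X] (hfS : ContinuousOn f S)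
    (hfT : ContinuousOn f T) (hS : MeasurableSet S) (hT : MeasurableSet T)
    (μ : Measure (X × X)) :
    AEMeasurable (fun q : X × X ↦ edist (f q.1) (f q.2)) (μ.restrict (S ×ˢ T)) :=
  have hfst : ContinuousOn (fun q : X × X ↦ f q.1) (S ×ˢ T) :=
    hfS.comp continuousOn_fst fun _ hq ↦ hq.1
  have hsnd : ContinuousOn (fun q : X × X ↦ f q.2) (S ×ˢ T) :=
    hfT.comp continuousOn_snd fun _ hq ↦ hq.2
  (continuous_edist.comp_continuousOn (hfst.prodMk hsnd)).aemeasurable (hS.prod hT)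

end Measurability

lemma le_tsum_of_le_add_of_tendsto_zero {D e : ℕ → ℝ≥0∞} (hD : ∀ n, D n ≤ D (n + 1) + e n)
    (hlim : Tendsto D atTop (𝓝 0)) : D 0 ≤ ∑' n, e n := by
  have partial_sum (n : ℕ) : D 0 ≤ D n + ∑ k ∈ Finset.range n, e k := by
    induction n with
    | zero => simp
    | succ n ih =>
      calc D 0 ≤ D n + ∑ k ∈ Finset.range n, e k := ih
        _ ≤ D (n + 1) + e n + ∑ k ∈ Finset.range n, e k := by gcongr; exact hD n
        _ = D (n + 1) + ∑ k ∈ Finset.range (n + 1), e k := by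
          rw [Finset.sum_range_succ]; ring
  have hlim' : Tendsto (fun n ↦ D n + ∑' k, e k) atTop (𝓝 (∑' k, e k)) := by
    simpa using hlim.add_const (∑' k, e k)
  refine ge_of_tendsto' hlim' fun n ↦ (partial_sum n).trans ?_
  gcongr
  exact ENNReal.sum_le_tsum _

section GagliardoEnergy

/-- The Gagliardo energy `∫_I ∫_I |f(u) - f(v)|^p / |u - v|^β`; for `β = 1 + sp` and `I ⊆ ℝ` it is
the `p`-th power of the `W^{s,p}(I)` seminorm of `f`. -/
noncomputable def gagliardoEnergy {X E : Type*} [PseudoEMetricSpace X] [MeasureSpace X]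
    [PseudoEMetricSpace E] (f : X → E) (p β : ℝ) (I : Set X) : ℝ≥0∞ :=
  ∫⁻ u in I, ∫⁻ v in I, edist (f u) (f v) ^ p / edist u v ^ β

variable {X E : Type*} [PseudoEMetricSpace E] {p β : ℝ}

lemma gagliardoEnergy_mono [PseudoEMetricSpace X] [MeasureSpace X] (f : X → E) (p β : ℝ)
    {I J : Set X} (h : I ⊆ J) : gagliardoEnergy f p β I ≤ gagliardoEnergy f p β J :=
  (lintegral_mono_set h).trans (lintegral_mono fun _ ↦ lintegral_mono_set h)

lemma setLIntegral_setLIntegral_edist_rpow_le [EMetricSpace X] [MeasureSpace X] (hp : 0 < p)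
    (hβ : 0 < β) (f : X → E) {S T : Set X} (hS : MeasurableSet S) (hT : MeasurableSet T)
    (hTS : T ⊆ S) (hdiam : ediam S ≠ ∞) :
    ∫⁻ u in S, ∫⁻ v in T, edist (f u) (f v) ^ p ≤ ediam S ^ β * gagliardoEnergy f p β S := by
  have hfin : ediam S ^ β ≠ ∞ := rpow_ne_top_of_nonneg hβ.le hdiam
  have pointwise {u v : X} (hu : u ∈ S) (hv : v ∈ T) :
      edist (f u) (f v) ^ p ≤ ediam S ^ β * (edist (f u) (f v) ^ p / edist u v ^ β) := by
    have huv : edist u v ≤ ediam S := edist_le_ediam_of_mem hu (hTS hv)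
    rcases eq_or_ne u v with rfl | hne
    · simp [hp]
    calc edist (f u) (f v) ^ p
        = edist u v ^ β * (edist (f u) (f v) ^ p / edist u v ^ β) := by
          refine (ENNReal.mul_div_cancel ?_ ?_).symm
          · simp [hne, hβ.le]
          · exact rpow_ne_top_of_nonneg hβ.le (ne_top_of_le_ne_top hdiam huv)
      _ ≤ _ := by gcongr
  calc ∫⁻ u in S, ∫⁻ v in T, edist (f u) (f v) ^ p
      ≤ ∫⁻ u in S, ∫⁻ v in T, ediam S ^ β * (edist (f u) (f v) ^ p / edist u v ^ β) :=
        setLIntegral_mono' hS fun _ hu ↦ setLIntegral_mono' hT fun _ hv ↦ pointwise hu hv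
    _ ≤ ∫⁻ u in S, ∫⁻ v in S, ediam S ^ β * (edist (f u) (f v) ^ p / edist u v ^ β) :=
        lintegral_mono fun _ ↦ lintegral_mono_set hTS
    _ = ediam S ^ β * gagliardoEnergy f p β S := by
        simp only [lintegral_const_mul' _ _ hfin, gagliardoEnergy]

end GagliardoEnergy

section Morrey

variable {E : Type*} [PseudoEMetricSpace E] {f : ℝ → E} {p γ : ℝ} {x y z : ℝ}

lemma edist_eq_ofReal_sub (h : x ≤ y) : edist x y = ENNReal.ofReal (y - x) := by
  rw [edist_comm, edist_dist, Real.dist_eq, abs_of_nonneg (sub_nonneg.2 h)]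

lemma neZero_restrict_Icc (h : x < y) : NeZero (volume.restrict (Icc x y)) :=
  ⟨by simpa [Measure.restrict_eq_zero] using h⟩

lemma rpow_setLAverage_edist_le_gagliardoEnergy (hp : 1 ≤ p) (hγ : 0 < γ) {a b c d : ℝ}
    (hab : a < b) (hsub : Icc c d ⊆ Icc a b) (hlen : b - a = 2 * (d - c))
    (hf : ContinuousOn f (Icc a b)) :
    (⨍⁻ u in Icc a b, ⨍⁻ v in Icc c d, edist (f u) (f v) ∂volume ∂volume) ^ p ≤
      2 * ENNReal.ofReal (b - a) ^ γ * gagliardoEnergy f p (2 + γ) (Icc a b) := by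
  have hcd : c < d := by linarith
  have := neZero_restrict_Icc hab
  have := neZero_restrict_Icc hcd
  have hmeas := aemeasurable_edist_prod hf (hf.mono hsub) measurableSet_Icc measurableSet_Icc
    volume
  rw [Measure.volume_eq_prod, ← Measure.prod_restrict] at hmeas
  set R := ENNReal.ofReal (d - c) with hR
  have hR0 : R ≠ 0 := by simpa [hR] using hcd
  have hRtop : R ≠ ∞ := ofReal_ne_top
  have hba : ENNReal.ofReal (b - a) = 2 * R := by rw [hlen, ofReal_mul zero_le_two, ofReal_ofNat]
  calc (⨍⁻ u in Icc a b, ⨍⁻ v in Icc c d, edist (f u) (f v) ∂volume ∂volume) ^ p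
      ≤ ⨍⁻ u in Icc a b, ⨍⁻ v in Icc c d, edist (f u) (f v) ^ p ∂volume ∂volume :=
        rpow_laverage_laverage_le_laverage_laverage_rpow hp hmeas
    _ = (∫⁻ u in Icc a b, ∫⁻ v in Icc c d, edist (f u) (f v) ^ p) * R⁻¹ * (2 * R)⁻¹ := by
        simp only [setLAverage_eq, Real.volume_Icc, hba, ← hR, div_eq_mul_inv]
        rw [lintegral_mul_const' _ _ (inv_ne_top.2 hR0)]
    _ ≤ (2 * R) ^ (2 + γ) * gagliardoEnergy f p (2 + γ) (Icc a b) * R⁻¹ * (2 * R)⁻¹ := by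
        gcongr
        rw [← hba, ← Real.ediam_Icc]
        exact setLIntegral_setLIntegral_edist_rpow_le (by positivity) (by positivity) f
          measurableSet_Icc measurableSet_Icc hsub (by simp)
    _ = 2 * (R * R⁻¹) * (2 * R * (2 * R)⁻¹) * (2 * R) ^ γ *
          gagliardoEnergy f p (2 + γ) (Icc a b) := by
        rw [rpow_add_of_nonneg _ _ zero_le_two hγ.le, rpow_two]
        ring
    _ = 2 * ENNReal.ofReal (b - a) ^ γ * gagliardoEnergy f p (2 + γ) (Icc a b) := by
        rw [ENNReal.mul_inv_cancel hR0 hRtop, ENNReal.mul_inv_cancel (by simp [hR0])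
          (mul_ne_top ofNat_ne_top hRtop), hba, mul_one, mul_one]

/-- The image of `[x, y]` under the homothety of ratio `r` centred at `z`, the sets along which the
averages of `f` are compared with `f z`. -/
def scaledIcc (x y z r : ℝ) : Set ℝ :=
  Icc (z + r * (x - z)) (z + r * (y - z))

lemma scaledIcc_one (x y z : ℝ) : scaledIcc x y z 1 = Icc x y := by
  simp [scaledIcc]

lemma scaledIcc_subset_scaledIcc (hz : z ∈ Icc x y) {r r' : ℝ} (h : r ≤ r') :
    scaledIcc x y z r ⊆ scaledIcc x y z r' := by
  obtain ⟨hxz, hzy⟩ := hz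
  apply Icc_subset_Icc <;> nlinarith

lemma scaledIcc_subset (hz : z ∈ Icc x y) {r : ℝ} (h : r ≤ 1) : scaledIcc x y z r ⊆ Icc x y :=
  scaledIcc_one x y z ▸ scaledIcc_subset_scaledIcc hz h

lemma tendsto_scaledIcc_smallSets (hz : z ∈ Icc x y) {ι : Type*} {l : Filter ι} {r : ι → ℝ}
    (h0 : ∀ i, 0 ≤ r i) (h1 : ∀ i, r i ≤ 1) (hr : Tendsto r l (𝓝 0)) :
    Tendsto (fun i ↦ scaledIcc x y z (r i)) l (𝓝[Icc x y] z).smallSets := by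
  have endpoint {w : ℝ} (hw : w ∈ Icc x y) :
      Tendsto (fun i ↦ z + r i * (w - z)) l (𝓝[Icc x y] z) := by
    refine tendsto_nhdsWithin_iff.2 ⟨?_, .of_forall fun i ↦ ?_⟩
    · simpa using (hr.mul_const (w - z)).const_add z
    · simpa using (convex_Icc x y).add_smul_sub_mem hz hw ⟨h0 i, h1 i⟩
  have hxy : x ≤ y := hz.1.trans hz.2
  exact (endpoint (left_mem_Icc.2 hxy)).Icc (endpoint (right_mem_Icc.2 hxy))

lemma setLAverage_scaledIcc_edist_le (hp : 1 ≤ p) (hγ : 0 < γ) (hxy : x < y) (hz : z ∈ Icc x y)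
    (hf : ContinuousOn f (Icc x y)) (n : ℕ) :
    ⨍⁻ u in scaledIcc x y z (2⁻¹ ^ n), ⨍⁻ v in scaledIcc x y z (2⁻¹ ^ (n + 1)),
        edist (f u) (f v) ∂volume ∂volume ≤
      (2 * ENNReal.ofReal (y - x) ^ γ * gagliardoEnergy f p (2 + γ) (Icc x y)) ^ p⁻¹ *
        ((2⁻¹ : ℝ≥0∞) ^ (γ / p)) ^ n := by
  have hr : (0 : ℝ) < 2⁻¹ ^ n := by positivity
  have hr1 : (2⁻¹ : ℝ) ^ n ≤ 1 := pow_le_one₀ (by norm_num) (by norm_num)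
  have hsucc : (2⁻¹ : ℝ) ^ (n + 1) = 2⁻¹ ^ n / 2 := by ring
  have hlen : z + 2⁻¹ ^ n * (y - z) - (z + 2⁻¹ ^ n * (x - z)) = 2⁻¹ ^ n * (y - x) := by ring
  have hlen_ofReal : ENNReal.ofReal (2⁻¹ ^ n * (y - x)) = 2⁻¹ ^ n * ENNReal.ofReal (y - x) := by
    rw [ofReal_mul hr.le, ofReal_pow (by norm_num), ofReal_inv_of_pos two_pos, ofReal_ofNat]
  have hp0 : 0 < p := by linarith
  have scale : ((2⁻¹ : ℝ≥0∞) ^ n) ^ γ = (((2⁻¹ : ℝ≥0∞) ^ (γ / p)) ^ n) ^ p := by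
    simp only [← rpow_natCast, ← ENNReal.rpow_mul]
    congr 1
    field_simp
  have step := rpow_setLAverage_edist_le_gagliardoEnergy hp hγ
    (by nlinarith : z + 2⁻¹ ^ n * (x - z) < z + 2⁻¹ ^ n * (y - z))
    (scaledIcc_subset_scaledIcc hz (by rw [hsucc]; linarith : (2⁻¹ : ℝ) ^ (n + 1) ≤ 2⁻¹ ^ n))
    (by rw [hsucc]; ring) (hf.mono (scaledIcc_subset hz hr1))
  rw [← ENNReal.rpow_le_rpow_iff hp0, ENNReal.mul_rpow_of_nonneg _ _ hp0.le,
    ENNReal.rpow_inv_rpow hp0.ne', ← scale]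
  refine step.trans ?_
  rw [hlen, hlen_ofReal, ENNReal.mul_rpow_of_nonneg _ _ hγ.le]
  calc _ ≤ 2 * (((2⁻¹ : ℝ≥0∞) ^ n) ^ γ * ENNReal.ofReal (y - x) ^ γ) *
          gagliardoEnergy f p (2 + γ) (Icc x y) := by
        gcongr
        exact gagliardoEnergy_mono f p _ (scaledIcc_subset hz hr1)
    _ = _ := by ring

lemma setLAverage_edist_le_gagliardoEnergy (hp : 1 ≤ p) (hγ : 0 < γ) (hxy : x < y)
    (hz : z ∈ Icc x y) (hf : ContinuousOn f (Icc x y)) :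
    ⨍⁻ u in Icc x y, edist (f z) (f u) ∂volume ≤
      (2 * ENNReal.ofReal (y - x) ^ γ * gagliardoEnergy f p (2 + γ) (Icc x y)) ^ p⁻¹ *
        (1 - (2⁻¹ : ℝ≥0∞) ^ (γ / p))⁻¹ := by
  let J (n : ℕ) : Set ℝ := scaledIcc x y z (2⁻¹ ^ n)
  have hr1 (n : ℕ) : (2⁻¹ : ℝ) ^ n ≤ 1 := pow_le_one₀ (by norm_num) (by norm_num)
  have hJne (n : ℕ) : NeZero (volume.restrict (J n)) := by
    refine neZero_restrict_Icc ?_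
    have : (0 : ℝ) < 2⁻¹ ^ n := by positivity
    nlinarith
  have hmeas (n : ℕ) : AEMeasurable (fun u ↦ edist (f z) (f u)) (volume.restrict (J n)) :=
    aemeasurable_edist_const_left (hf.mono (scaledIcc_subset hz (hr1 n))) measurableSet_Icc _ _
  have hlim : Tendsto (fun n ↦ ⨍⁻ u in J n, edist (f z) (f u) ∂volume) atTop (𝓝 0) := by
    refine tendsto_setLAverage_zero (tendsto_scaledIcc_smallSets hz (fun n ↦ by positivity) hr1
      (tendsto_pow_atTop_nhds_zero_of_lt_one (by norm_num) (by norm_num)))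
      (fun _ ↦ measurableSet_Icc) ?_
    simpa using (tendsto_const_nhds (x := f z)).edist (hf z hz)
  have hfin (n : ℕ) : IsFiniteMeasure (volume.restrict (J n)) :=
    inferInstanceAs (IsFiniteMeasure (volume.restrict (Icc _ _)))
  calc ⨍⁻ u in Icc x y, edist (f z) (f u) ∂volume
      = ⨍⁻ u in J 0, edist (f z) (f u) ∂volume := by simp only [J, pow_zero, scaledIcc_one]
    _ ≤ ∑' n, ⨍⁻ u in J n, ⨍⁻ v in J (n + 1), edist (f u) (f v) ∂volume ∂volume :=
        le_tsum_of_le_add_of_tendsto_zero (D := fun n ↦ ⨍⁻ u in J n, edist (f z) (f u) ∂volume)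
          (fun n ↦ laverage_edist_le_add _ _ (hmeas (n + 1)) f) hlim
    _ ≤ ∑' n, (2 * ENNReal.ofReal (y - x) ^ γ * gagliardoEnergy f p (2 + γ) (Icc x y)) ^ p⁻¹ *
          ((2⁻¹ : ℝ≥0∞) ^ (γ / p)) ^ n :=
        ENNReal.tsum_le_tsum (setLAverage_scaledIcc_edist_le hp hγ hxy hz hf)
    _ = _ := by rw [ENNReal.tsum_mul_left, ENNReal.tsum_geometric]

/-- The constant in the Morrey-type estimate `ediam_image_uIcc_rpow_le`. -/
noncomputable def morreyConst (p γ : ℝ) : ℝ≥0∞ :=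
  2 * (2 * (1 - (2⁻¹ : ℝ≥0∞) ^ (γ / p))⁻¹) ^ p

lemma morreyConst_ne_top (hp : 0 < p) (hγ : 0 < γ) : morreyConst p γ ≠ ∞ := by
  have hq : (2⁻¹ : ℝ≥0∞) ^ (γ / p) < 1 := rpow_lt_one (by simp) (by positivity)
  refine mul_ne_top ofNat_ne_top (rpow_ne_top_of_nonneg hp.le (mul_ne_top ofNat_ne_top ?_))
  exact inv_ne_top.2 (tsub_pos_of_lt hq).ne'

lemma ediam_image_Icc_rpow_le (hp : 1 ≤ p) (hγ : 0 < γ) (hxy : x < y)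
    (hf : ContinuousOn f (Icc x y)) :
    ediam (f '' Icc x y) ^ p ≤
      morreyConst p γ * (ENNReal.ofReal (y - x) ^ γ * gagliardoEnergy f p (2 + γ) (Icc x y)) := by
  have hp0 : 0 < p := by linarith
  have := neZero_restrict_Icc hxy
  set A := ENNReal.ofReal (y - x) ^ γ * gagliardoEnergy f p (2 + γ) (Icc x y) with hA
  set Q := (1 - (2⁻¹ : ℝ≥0∞) ^ (γ / p))⁻¹
  have average_le {z : ℝ} (hz : z ∈ Icc x y) :
      ⨍⁻ u in Icc x y, edist (f z) (f u) ∂volume ≤ (2 * A) ^ p⁻¹ * Q := by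
    simpa only [hA, mul_assoc] using setLAverage_edist_le_gagliardoEnergy hp hγ hxy hz hf
  have diam_le : ediam (f '' Icc x y) ≤ 2 * Q * (2 * A) ^ p⁻¹ := by
    refine ediam_image_le_iff.2 fun z hz t ht ↦ ?_
    calc edist (f z) (f t)
        ≤ (⨍⁻ u in Icc x y, edist (f z) (f u) ∂volume) +
            ⨍⁻ u in Icc x y, edist (f t) (f u) ∂volume :=
          edist_le_laverage_edist_add _
            (aemeasurable_edist_const_left hf measurableSet_Icc _ _) _
      _ ≤ (2 * A) ^ p⁻¹ * Q + (2 * A) ^ p⁻¹ * Q := add_le_add (average_le hz) (average_le ht)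
      _ = 2 * Q * (2 * A) ^ p⁻¹ := by ring
  calc ediam (f '' Icc x y) ^ p ≤ (2 * Q * (2 * A) ^ p⁻¹) ^ p := by gcongr
    _ = (2 * Q) ^ p * (2 * A) := by
        rw [ENNReal.mul_rpow_of_nonneg _ _ hp0.le, ENNReal.rpow_inv_rpow hp0.ne']
    _ = morreyConst p γ * A := by rw [morreyConst]; ring

lemma ediam_image_uIcc_rpow_le (hp : 1 ≤ p) (hγ : 0 < γ) (hf : ContinuousOn f (uIcc x y)) :
    ediam (f '' uIcc x y) ^ p ≤
      morreyConst p γ * (edist x y ^ γ * gagliardoEnergy f p (2 + γ) (uIcc x y)) := by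
  wlog hxy : x ≤ y generalizing x y
  · rw [uIcc_comm, edist_comm]
    exact this (uIcc_comm x y ▸ hf) (le_of_not_ge hxy)
  rcases hxy.eq_or_lt with rfl | hlt
  · simp [show 0 < p by linarith]
  rw [edist_eq_ofReal_sub hxy]
  rw [uIcc_of_le hxy] at hf ⊢
  exact ediam_image_Icc_rpow_le hp hγ hlt hf

end Morrey

section Kernel

variable {c γ : ℝ} {u v x y : ℝ}

lemma lintegral_Ici_ofReal_rpow (hc : 0 < c) {r : ℝ} (hr : 0 < r) :
    ∫⁻ t in Ici r, ENNReal.ofReal t ^ (-(1 + c)) =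
      ENNReal.ofReal r ^ (-c) / ENNReal.ofReal c := by
  have hint := integrableOn_Ioi_rpow_of_lt (by linarith : -(1 + c) < -1) hr
  have hnonneg : 0 ≤ᵐ[volume.restrict (Ioi r)] fun t ↦ t ^ (-(1 + c)) :=
    ae_restrict_of_forall_mem measurableSet_Ioi fun t ht ↦ Real.rpow_nonneg (hr.trans ht).le _
  calc ∫⁻ t in Ici r, ENNReal.ofReal t ^ (-(1 + c))
      = ∫⁻ t in Ioi r, ENNReal.ofReal t ^ (-(1 + c)) := setLIntegral_congr Ioi_ae_eq_Ici.symm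
    _ = ∫⁻ t in Ioi r, ENNReal.ofReal (t ^ (-(1 + c))) :=
        setLIntegral_congr_fun measurableSet_Ioi fun t ht ↦ ofReal_rpow_of_pos (hr.trans ht)
    _ = ENNReal.ofReal (r ^ (-c) / c) := by
        rw [← ofReal_integral_eq_lintegral_ofReal hint hnonneg,
          integral_Ioi_rpow_of_lt (by linarith) hr, show -(1 + c) + 1 = -c by ring, neg_div_neg_eq]
    _ = _ := by rw [ofReal_div_of_pos hc, ofReal_rpow_of_pos hr]

lemma lintegral_Ici_edist_rpow (hc : 0 < c) (h : x < v) :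
    ∫⁻ y in Ici v, edist x y ^ (-(1 + c)) = edist x v ^ (-c) / ENNReal.ofReal c := by
  have hshift := (measurePreserving_sub_right volume x).setLIntegral_comp_preimage
    (measurableSet_Ici (a := v - x)) (f := fun t ↦ ENNReal.ofReal t ^ (-(1 + c))) (by fun_prop)
  rw [preimage_sub_const_Ici, sub_add_cancel, lintegral_Ici_ofReal_rpow hc (sub_pos.2 h)] at hshift
  rw [edist_eq_ofReal_sub h.le, ← hshift]
  refine setLIntegral_congr_fun measurableSet_Ici fun y hy ↦ ?_
  rw [edist_eq_ofReal_sub (h.le.trans hy)]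

lemma lintegral_Iic_edist_rpow (hc : 0 < c) (h : u < v) :
    ∫⁻ x in Iic u, edist x v ^ (-(1 + c)) = edist u v ^ (-c) / ENNReal.ofReal c := by
  have hreflect := (Measure.measurePreserving_sub_left volume v).setLIntegral_comp_preimage
    (measurableSet_Ici (a := v - u)) (f := fun t ↦ ENNReal.ofReal t ^ (-(1 + c))) (by fun_prop)
  rw [preimage_const_sub_Ici, _root_.sub_sub_cancel, lintegral_Ici_ofReal_rpow hc (sub_pos.2 h)]
    at hreflect
  rw [edist_eq_ofReal_sub h.le, ← hreflect]
  refine setLIntegral_congr_fun measurableSet_Iic fun x hx ↦ ?_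
  rw [edist_eq_ofReal_sub (le_trans hx h.le)]

lemma lintegral_Iic_prod_Ici_edist_rpow (hγ : 0 < γ) (h : u < v) :
    ∫⁻ P in Iic u ×ˢ Ici v, edist P.1 P.2 ^ (-(2 + γ)) =
      edist u v ^ (-γ) / (ENNReal.ofReal γ * ENNReal.ofReal (1 + γ)) := by
  have inner {x : ℝ} (hx : x ∈ Iic u) : ∫⁻ y in Ici v, edist x y ^ (-(2 + γ)) =
      edist x v ^ (-(1 + γ)) / ENNReal.ofReal (1 + γ) := by
    rw [← lintegral_Ici_edist_rpow (by positivity) (lt_of_le_of_lt hx h), ← add_assoc,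
      one_add_one_eq_two]
  calc ∫⁻ P in Iic u ×ˢ Ici v, edist P.1 P.2 ^ (-(2 + γ))
      = ∫⁻ x in Iic u, ∫⁻ y in Ici v, edist x y ^ (-(2 + γ)) :=
        setLIntegral_prod _ (by fun_prop)
    _ = ∫⁻ x in Iic u, edist x v ^ (-(1 + γ)) / ENNReal.ofReal (1 + γ) :=
        setLIntegral_congr_fun measurableSet_Iic fun _ ↦ inner
    _ = edist u v ^ (-γ) / (ENNReal.ofReal γ * ENNReal.ofReal (1 + γ)) := by
        simp only [div_eq_mul_inv]
        rw [lintegral_mul_const _ (by fun_prop), lintegral_Iic_edist_rpow hγ h, div_eq_mul_inv,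
          ENNReal.mul_inv (.inr ofReal_ne_top) (.inl ofReal_ne_top), mul_assoc]

/-- The constant in the kernel estimate `lintegral_edist_rpow_of_mem_uIcc_le`. -/
noncomputable def kernelConst (γ : ℝ) : ℝ≥0∞ :=
  2 / (ENNReal.ofReal γ * ENNReal.ofReal (1 + γ))

lemma kernelConst_ne_zero (γ : ℝ) : kernelConst γ ≠ 0 := by
  simp [kernelConst, mul_eq_top]

lemma kernelConst_ne_top (hγ : 0 < γ) : kernelConst γ ≠ ∞ :=
  div_ne_top ofNat_ne_top (by simp [hγ, add_pos one_pos hγ])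

lemma lintegral_edist_rpow_of_mem_uIcc_le (hγ : 0 < γ) (u v : ℝ) :
    ∫⁻ P in {P : ℝ × ℝ | u ∈ uIcc P.1 P.2 ∧ v ∈ uIcc P.1 P.2}, edist P.1 P.2 ^ (-(2 + γ)) ≤
      kernelConst γ * edist u v ^ (-γ) := by
  wlog huv : u ≤ v generalizing u v
  · simpa only [and_comm, edist_comm] using this v u (le_of_not_ge huv)
  rcases huv.eq_or_lt with rfl | hlt
  · simp [hγ, kernelConst_ne_zero, ENNReal.mul_top]
  have hsub : {P : ℝ × ℝ | u ∈ uIcc P.1 P.2 ∧ v ∈ uIcc P.1 P.2} ⊆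
      Iic u ×ˢ Ici v ∪ Ici v ×ˢ Iic u := by
    rintro ⟨x, y⟩ ⟨hu, hv⟩
    rcases le_total x y with hxy | hxy
    · rw [uIcc_of_le hxy] at hu hv
      exact .inl ⟨hu.1, hv.2⟩
    · rw [uIcc_of_ge hxy] at hu hv
      exact .inr ⟨hv.2, hu.1⟩
  have hswap : ∫⁻ P in Ici v ×ˢ Iic u, edist P.1 P.2 ^ (-(2 + γ)) =
      ∫⁻ P in Iic u ×ˢ Ici v, edist P.1 P.2 ^ (-(2 + γ)) := by
    rw [Measure.volume_eq_prod, setLIntegral_prod _ (by fun_prop),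
      setLIntegral_prod_symm _ (by fun_prop)]
    simp only [edist_comm]
  calc ∫⁻ P in {P : ℝ × ℝ | u ∈ uIcc P.1 P.2 ∧ v ∈ uIcc P.1 P.2}, edist P.1 P.2 ^ (-(2 + γ))
      ≤ ∫⁻ P in Iic u ×ˢ Ici v ∪ Ici v ×ˢ Iic u, edist P.1 P.2 ^ (-(2 + γ)) :=
        lintegral_mono_set hsub
    _ ≤ (∫⁻ P in Iic u ×ˢ Ici v, edist P.1 P.2 ^ (-(2 + γ))) +
          ∫⁻ P in Ici v ×ˢ Iic u, edist P.1 P.2 ^ (-(2 + γ)) := lintegral_union_le _ _ _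
    _ = _ := by
        rw [hswap, lintegral_Iic_prod_Ici_edist_rpow hγ hlt, kernelConst, div_eq_mul_inv,
          div_eq_mul_inv]
        ring

end Kernel

section Tonelli

variable {X Y : Type*} [MeasurableSpace X] [MeasurableSpace Y] {μ : Measure X} {ν : Measure Y}
  {T : Set (X × Y)} {g : Y → ℝ≥0∞}

lemma aemeasurable_setLIntegral_slice [SFinite ν] (hT : MeasurableSet T)
    (hg : AEMeasurable g ν) : AEMeasurable (fun x ↦ ∫⁻ y in Prod.mk x ⁻¹' T, g y ∂ν) μ := by
  have hslice (x : X) : ∫⁻ y in Prod.mk x ⁻¹' T, g y ∂ν =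
      ∫⁻ y, T.indicator (fun z ↦ g z.2) (x, y) ∂ν :=
    (lintegral_indicator (measurable_prodMk_left hT) _).symm
  simp only [hslice]
  exact (hg.comp_snd.indicator hT).lintegral_prod_right'

lemma lintegral_mul_setLIntegral_slice_swap [SFinite μ] [SFinite ν] (hT : MeasurableSet T)
    {k : X → ℝ≥0∞} (hk : AEMeasurable k μ) (hg : AEMeasurable g ν) :
    ∫⁻ x, k x * ∫⁻ y in Prod.mk x ⁻¹' T, g y ∂ν ∂μ =
      ∫⁻ y, g y * ∫⁻ x in (fun x ↦ (x, y)) ⁻¹' T, k x ∂μ ∂ν := by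
  have hF : AEMeasurable (T.indicator fun z ↦ k z.1 * g z.2) (μ.prod ν) :=
    (hk.comp_fst.mul hg.comp_snd).indicator hT
  calc ∫⁻ x, k x * ∫⁻ y in Prod.mk x ⁻¹' T, g y ∂ν ∂μ
      = ∫⁻ x, ∫⁻ y, T.indicator (fun z ↦ k z.1 * g z.2) (x, y) ∂ν ∂μ := by
        refine lintegral_congr fun x ↦ ?_
        rw [← lintegral_const_mul'' _ hg.restrict,
          ← lintegral_indicator (measurable_prodMk_left hT)]
        rfl
    _ = ∫⁻ y, ∫⁻ x, T.indicator (fun z ↦ k z.1 * g z.2) (x, y) ∂μ ∂ν :=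
        lintegral_lintegral_swap hF
    _ = ∫⁻ y, g y * ∫⁻ x in (fun x ↦ (x, y)) ⁻¹' T, k x ∂μ ∂ν := by
        refine lintegral_congr fun y ↦ ?_
        rw [← lintegral_const_mul'' _ hk.restrict,
          ← lintegral_indicator (measurable_prodMk_right hT)]
        simp only [mul_comm (g y)]
        rfl

end Tonelli

section ReverseOscillation

variable {E : Type*} [PseudoEMetricSpace E] {f : ℝ → E} {p γ : ℝ} {I : Set ℝ}

lemma aemeasurable_edist_rpow_div (hI : MeasurableSet I) (hf : ContinuousOn f I) (p β : ℝ) :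
    AEMeasurable (fun q : ℝ × ℝ ↦ edist (f q.1) (f q.2) ^ p / edist q.1 q.2 ^ β)
      (volume.restrict (I ×ˢ I)) :=
  ((aemeasurable_edist_prod hf hf hI hI volume).pow_const p).div (by fun_prop)

lemma gagliardoEnergy_eq_setLIntegral_prod (hI : MeasurableSet I) (hf : ContinuousOn f I)
    (p β : ℝ) : gagliardoEnergy f p β I =
      ∫⁻ q in I ×ˢ I, edist (f q.1) (f q.2) ^ p / edist q.1 q.2 ^ β :=
  (setLIntegral_prod _ (aemeasurable_edist_rpow_div hI hf p β)).symm

/-- The pairs `((x, y), (u, v))` such that `u` and `v` both lie between `x` and `y`: the domain over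
which Tonelli's theorem exchanges the integrals in `(x, y)` and in `(u, v)`. -/
def nestedPairs : Set ((ℝ × ℝ) × (ℝ × ℝ)) :=
  {z | z.2.1 ∈ uIcc z.1.1 z.1.2 ∧ z.2.2 ∈ uIcc z.1.1 z.1.2}

lemma measurableSet_nestedPairs : MeasurableSet nestedPairs := by
  simp only [nestedPairs, uIcc, mem_Icc, ofPred_and]
  refine IsClosed.measurableSet (.inter (.inter ?_ ?_) (.inter ?_ ?_)) <;>
    exact isClosed_le (by fun_prop) (by fun_prop)

lemma setLIntegral_nestedPairs_eq_gagliardoEnergy (hI : I.OrdConnected) (hf : ContinuousOn f I)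
    (p β : ℝ) {x y : ℝ} (hx : x ∈ I) (hy : y ∈ I) :
    ∫⁻ q in Prod.mk (x, y) ⁻¹' nestedPairs, edist (f q.1) (f q.2) ^ p / edist q.1 q.2 ^ β
        ∂(volume.restrict (I ×ˢ I)) = gagliardoEnergy f p β (uIcc x y) := by
  have hsub : uIcc x y ⊆ I := hI.uIcc_subset hx hy
  have hslice : Prod.mk (x, y) ⁻¹' nestedPairs = uIcc x y ×ˢ uIcc x y := rfl
  rw [hslice, Measure.restrict_restrict (measurableSet_uIcc.prod measurableSet_uIcc),
    inter_eq_left.2 (prod_mono hsub hsub),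
    gagliardoEnergy_eq_setLIntegral_prod measurableSet_uIcc (hf.mono hsub)]

lemma edist_rpow_div_mul_setLIntegral_nestedPairs_le (hγ : 0 < γ) (f : ℝ → E) (p : ℝ) (I : Set ℝ)
    (q : ℝ × ℝ) :
    edist (f q.1) (f q.2) ^ p / edist q.1 q.2 ^ (2 + γ) *
        ∫⁻ P in (fun P ↦ (P, q)) ⁻¹' nestedPairs, edist P.1 P.2 ^ (-(2 + γ))
          ∂(volume.restrict (I ×ˢ I)) ≤
      kernelConst γ * (edist (f q.1) (f q.2) ^ p / edist q.1 q.2 ^ (2 + 2 * γ)) := by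
  set d := edist q.1 q.2
  have hd (β : ℝ) (hβ : 0 ≤ β) : d ^ β ≠ ∞ := rpow_ne_top_of_nonneg hβ (edist_ne_top _ _)
  have hsplit : (d ^ (2 + 2 * γ))⁻¹ = (d ^ (2 + γ))⁻¹ * d ^ (-γ) := by
    rw [show 2 + 2 * γ = (2 + γ) + γ by ring, rpow_add_of_nonneg _ _ (by positivity) hγ.le,
      rpow_neg, ENNReal.mul_inv (.inr (hd _ hγ.le)) (.inl (hd _ (by positivity)))]
  calc _ ≤ edist (f q.1) (f q.2) ^ p / d ^ (2 + γ) * (kernelConst γ * d ^ (-γ)) := by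
        gcongr
        exact (lintegral_mono' (Measure.restrict_mono_measure Measure.restrict_le_self _)
          le_rfl).trans (lintegral_edist_rpow_of_mem_uIcc_le hγ q.1 q.2)
    _ = _ := by
        rw [div_eq_mul_inv, div_eq_mul_inv, hsplit]
        ring

lemma lintegral_edist_rpow_mul_gagliardoEnergy_uIcc_le (hγ : 0 < γ) (hI : I.OrdConnected)
    (hf : ContinuousOn f I) (p : ℝ) :
    ∫⁻ x in I, ∫⁻ y in I, edist x y ^ (-(2 + γ)) * gagliardoEnergy f p (2 + γ) (uIcc x y) ≤
      kernelConst γ * gagliardoEnergy f p (2 + 2 * γ) I := by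
  have hIm : MeasurableSet I := hI.measurableSet
  let g (q : ℝ × ℝ) : ℝ≥0∞ := edist (f q.1) (f q.2) ^ p / edist q.1 q.2 ^ (2 + γ)
  have hg : AEMeasurable g (volume.restrict (I ×ˢ I)) := aemeasurable_edist_rpow_div hIm hf _ _
  have hinner : AEMeasurable (fun P : ℝ × ℝ ↦ edist P.1 P.2 ^ (-(2 + γ)) *
      ∫⁻ q in Prod.mk P ⁻¹' nestedPairs, g q ∂(volume.restrict (I ×ˢ I)))
      (volume.restrict (I ×ˢ I)) :=
    .mul (by fun_prop) (aemeasurable_setLIntegral_slice measurableSet_nestedPairs hg)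
  calc ∫⁻ x in I, ∫⁻ y in I, edist x y ^ (-(2 + γ)) * gagliardoEnergy f p (2 + γ) (uIcc x y)
      = ∫⁻ x in I, ∫⁻ y in I, edist x y ^ (-(2 + γ)) *
          ∫⁻ q in Prod.mk (x, y) ⁻¹' nestedPairs, g q ∂(volume.restrict (I ×ˢ I)) :=
        setLIntegral_congr_fun hIm fun x hx ↦ setLIntegral_congr_fun hIm fun y hy ↦ by
          rw [setLIntegral_nestedPairs_eq_gagliardoEnergy hI hf p _ hx hy]
    _ = ∫⁻ P in I ×ˢ I, edist P.1 P.2 ^ (-(2 + γ)) *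
          ∫⁻ q in Prod.mk P ⁻¹' nestedPairs, g q ∂(volume.restrict (I ×ˢ I)) :=
        (setLIntegral_prod _ hinner).symm
    _ = ∫⁻ q in I ×ˢ I, g q *
          ∫⁻ P in (fun P ↦ (P, q)) ⁻¹' nestedPairs, edist P.1 P.2 ^ (-(2 + γ))
            ∂(volume.restrict (I ×ˢ I)) :=
        lintegral_mul_setLIntegral_slice_swap measurableSet_nestedPairs (by fun_prop) hg
    _ ≤ ∫⁻ q in I ×ˢ I,
          kernelConst γ * (edist (f q.1) (f q.2) ^ p / edist q.1 q.2 ^ (2 + 2 * γ)) :=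
        lintegral_mono (edist_rpow_div_mul_setLIntegral_nestedPairs_le hγ f p I)
    _ = _ := by
        rw [lintegral_const_mul' _ _ (kernelConst_ne_top hγ),
          ← gagliardoEnergy_eq_setLIntegral_prod hIm hf]

lemma ediam_image_uIcc_rpow_div_le (hp : 1 ≤ p) (hγ : 0 < γ) {x y : ℝ}
    (hf : ContinuousOn f (uIcc x y)) :
    ediam (f '' uIcc x y) ^ p / edist x y ^ (2 + 2 * γ) ≤ morreyConst p γ *
      (edist x y ^ (-(2 + γ)) * gagliardoEnergy f p (2 + γ) (uIcc x y)) := by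
  rcases eq_or_ne x y with rfl | hxy
  · simp [show 0 < p by linarith]
  have hsplit : edist x y ^ (-(2 + γ)) = edist x y ^ γ * (edist x y ^ (2 + 2 * γ))⁻¹ := by
    rw [← ENNReal.rpow_neg, ← ENNReal.rpow_add _ _ (edist_pos.2 hxy).ne' (edist_ne_top _ _)]
    congr 1
    ring
  calc ediam (f '' uIcc x y) ^ p / edist x y ^ (2 + 2 * γ)
      ≤ morreyConst p γ * (edist x y ^ γ * gagliardoEnergy f p (2 + γ) (uIcc x y)) /
          edist x y ^ (2 + 2 * γ) := by
        gcongr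
        exact ediam_image_uIcc_rpow_le hp hγ hf
    _ = _ := by
        rw [hsplit, div_eq_mul_inv]
        ring

lemma lintegral_ediam_image_uIcc_rpow_le (hp : 1 ≤ p) (hγ : 0 < γ) (hI : I.OrdConnected)
    (hf : ContinuousOn f I) :
    ∫⁻ x in I, ∫⁻ y in I, ediam (f '' uIcc x y) ^ p / edist x y ^ (2 + 2 * γ) ≤
      morreyConst p γ * kernelConst γ * gagliardoEnergy f p (2 + 2 * γ) I := by
  have hp0 : 0 < p := by linarith
  calc ∫⁻ x in I, ∫⁻ y in I, ediam (f '' uIcc x y) ^ p / edist x y ^ (2 + 2 * γ)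
      ≤ ∫⁻ x in I, ∫⁻ y in I, morreyConst p γ *
          (edist x y ^ (-(2 + γ)) * gagliardoEnergy f p (2 + γ) (uIcc x y)) :=
        setLIntegral_mono' hI.measurableSet fun x hx ↦
          setLIntegral_mono' hI.measurableSet fun y hy ↦
            ediam_image_uIcc_rpow_div_le hp hγ (hf.mono (hI.uIcc_subset hx hy))
    _ = morreyConst p γ * ∫⁻ x in I, ∫⁻ y in I,
          edist x y ^ (-(2 + γ)) * gagliardoEnergy f p (2 + γ) (uIcc x y) := by
        simp only [lintegral_const_mul' _ _ (morreyConst_ne_top hp0 hγ)]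
    _ ≤ _ := by
        rw [mul_assoc]
        gcongr
        exact lintegral_edist_rpow_mul_gagliardoEnergy_uIcc_le hγ hI hf p

end ReverseOscillation

lemma oscE_eq_ediam_image (f : ℝ → ℝ) (A : Set ℝ) : oscE f A = ediam (f '' A) := by
  simp only [oscE, ediam, iSup_image]

theorem reverse_oscillation_inequality_general {s p : ℝ} (hp : 1 ≤ p) (hsp : 1 < s * p) :
    ∃ C : ℝ, 0 < C ∧ ∀ (E : Type u) [PseudoEMetricSpace E] (I : Set ℝ), I.OrdConnected →
      ∀ f : ℝ → E, ContinuousOn f I →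
        (∫⁻ x in I, ∫⁻ y in I,
            ediam (f '' (uIcc x y ∩ I)) ^ p / edist x y ^ (1 + s * p)) ≤
          ENNReal.ofReal C * gagliardoEnergy f p (1 + s * p) I := by
  obtain ⟨γ, hγ, hexp⟩ : ∃ γ : ℝ, 0 < γ ∧ 1 + s * p = 2 + 2 * γ :=
    ⟨(s * p - 1) / 2, by linarith, by ring⟩
  set K := morreyConst p γ * kernelConst γ
  have hK : K ≠ ∞ := mul_ne_top (morreyConst_ne_top (by linarith) hγ) (kernelConst_ne_top hγ)
  have hKC : K ≤ ENNReal.ofReal (K.toReal + 1) :=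
    (le_ofReal_iff_toReal_le hK (by positivity)).2 (by linarith)
  refine ⟨K.toReal + 1, by positivity, fun E _ I hI f hf ↦ ?_⟩
  rw [hexp]
  calc ∫⁻ x in I, ∫⁻ y in I, ediam (f '' (uIcc x y ∩ I)) ^ p / edist x y ^ (2 + 2 * γ)
      ≤ ∫⁻ x in I, ∫⁻ y in I, ediam (f '' uIcc x y) ^ p / edist x y ^ (2 + 2 * γ) := by
        gcongr
        exact inter_subset_left
    _ ≤ K * gagliardoEnergy f p (2 + 2 * γ) I := lintegral_ediam_image_uIcc_rpow_le hp hγ hI hf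
    _ ≤ _ := by gcongr

/-- **Reverse oscillation inequality.** For `0 < s < 1`, `1 < p` with `sp > 1`, there is a
constant `C = C(s,p)` such that for every open interval `I ⊆ ℝ` (an open order-connected set)
and every continuous `f : I → ℝ`,
`∫_I ∫_I (osc_{[x,y]} f)^p / |y-x|^{1+sp} ≤ C ∫_I ∫_I |f(y)-f(x)|^p / |y-x|^{1+sp}`. -/
theorem reverse_oscillation_inequality (s p : ℝ) (hs0 : 0 < s) (hs1 : s < 1)
    (hp1 : 1 < p) (hsp : 1 < s * p) :
    ∃ C : ℝ, 0 < C ∧ ∀ I : Set ℝ, IsOpen I → I.OrdConnected →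
      ∀ f : ℝ → ℝ, ContinuousOn f I →
        (∫⁻ x in I, ∫⁻ y in I,
            oscE f (uIcc x y ∩ I) ^ p / edist x y ^ (1 + s * p)) ≤
          ENNReal.ofReal C *
            ∫⁻ x in I, ∫⁻ y in I,
              edist (f x) (f y) ^ p / edist x y ^ (1 + s * p) := by
  obtain ⟨C, hC, hle⟩ := reverse_oscillation_inequality_general hp1.le hsp
  exact ⟨C, hC, fun I _ hI f hf ↦ by
    simpa only [oscE_eq_ediam_image, gagliardoEnergy] using hle ℝ I hI f hf⟩
end

section
/- Let 0<s<1, 1≤p<∞ and m > 0. Let (M, d) be a connected compact metric space equipped with a finite Borel measure μ which is positive on every nonempty open set, and let (C_j)_{j∈J} be a finite family of open subsets of M covering M. Then there is a constant C (depending on s, p, m, M, μ and the cover) such that for every metric space (X, d_X) and every Borel measurable map u : M → X, ∫_M∫_M d_X(u(x),u(y))^p dμ(x) dμ(y) ≤ C Σ_{j∈J} ∫_{C_j}∫_{C_j} d_X(u(x),u(y))^p / d(x,y)^{m+sp} dμ(x) dμ(y). -/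
open MeasureTheory Set ENNReal

/-!
Write `E A = ∫_A ∫_A d_X(u(x),u(y))^p`. Averaging the quasi-triangle inequality over intermediate
points in a set `W` of positive measure bounds `E A` by a multiple of `∫_A ∫_W d_X(u(x),u(y))^p`.
Applied to `A ∪ B` with `W = A ∩ B`, this bounds `E (A ∪ B)` by a multiple of `E A + E B` as soon as
the open sets `A` and `B` meet. As `M` is connected, finitely many such unions build `M` out of the
cover. Finally `d(x,y)^(m+sp)` is bounded on `M`, so dividing by it costs a constant factor.
-/

/-- A symmetric kernel obeying the triangle inequality up to the factor `c`, such as a power of the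
distance. Only the sections are assumed measurable, because on a non-separable metric space the
distance need not be measurable for the product `σ`-algebra. -/
structure IsQuasimetricKernel {M : Type*} [MeasurableSpace M] (c : ℝ≥0∞) (f : M → M → ℝ≥0∞) :
    Prop where
  symm : ∀ x y, f x y = f y x
  triangle : ∀ x y z, f x z ≤ c * (f x y + f y z)
  measurable_section : ∀ x, Measurable (f x)

/-- The energy `∫_A ∫_A f(x, y) dμ(y) dμ(x)` of the interaction kernel `f` on the set `A`. -/
noncomputable def kernelEnergy {M : Type*} [MeasurableSpace M] (μ : Measure M)
    (f : M → M → ℝ≥0∞) (A : Set M) : ℝ≥0∞ :=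
  ∫⁻ x in A, ∫⁻ y in A, f x y ∂μ ∂μ

section Energy

variable {M : Type*} [MeasurableSpace M] {μ : Measure M} {c : ℝ≥0∞} {f : M → M → ℝ≥0∞}

theorem IsQuasimetricKernel.measure_mul_le (hf : IsQuasimetricKernel c f) (hc : c ≠ ⊤) (W : Set M)
    (x z : M) : μ W * f x z ≤ c * ((∫⁻ y in W, f x y ∂μ) + ∫⁻ y in W, f z y ∂μ) :=
  calc μ W * f x z = ∫⁻ _ in W, f x z ∂μ := by rw [setLIntegral_const, mul_comm]
    _ ≤ ∫⁻ y in W, c * (f x y + f z y) ∂μ :=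
        lintegral_mono fun y => hf.symm z y ▸ hf.triangle x y z
    _ = c * ((∫⁻ y in W, f x y ∂μ) + ∫⁻ y in W, f z y ∂μ) := by
        rw [lintegral_const_mul' _ _ hc, lintegral_add_left (hf.measurable_section x)]

theorem IsQuasimetricKernel.measure_mul_kernelEnergy_le [IsFiniteMeasure μ]
    (hf : IsQuasimetricKernel c f) (hc : c ≠ ⊤) (A W : Set M) :
    μ W * kernelEnergy μ f A ≤ 2 * c * μ A * ∫⁻ x in A, ∫⁻ y in W, f x y ∂μ ∂μ := by
  set g : M → ℝ≥0∞ := fun x => ∫⁻ y in W, f x y ∂μ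
  have hA : μ A ≠ ⊤ := measure_ne_top μ A
  have hW : μ W ≠ ⊤ := measure_ne_top μ W
  calc μ W * kernelEnergy μ f A = ∫⁻ x in A, ∫⁻ z in A, μ W * f x z ∂μ ∂μ := by
        simp only [kernelEnergy, lintegral_const_mul' _ _ hW]
    _ ≤ ∫⁻ x in A, ∫⁻ z in A, c * (g x + g z) ∂μ ∂μ :=
        lintegral_mono fun x => lintegral_mono fun z => hf.measure_mul_le hc W x z
    _ = c * (μ A * (∫⁻ x in A, g x ∂μ) + μ A * ∫⁻ z in A, g z ∂μ) := by
        simp only [lintegral_const_mul' _ _ hc, lintegral_add_left measurable_const,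
          lintegral_add_right _ measurable_const, setLIntegral_const, mul_comm _ (μ A),
          lintegral_const_mul' _ _ hA]
    _ = 2 * c * μ A * ∫⁻ x in A, g x ∂μ := by ring

theorem setLIntegral_union_inter_le_kernelEnergy_add (A B : Set M) :
    ∫⁻ x in A ∪ B, ∫⁻ y in A ∩ B, f x y ∂μ ∂μ ≤ kernelEnergy μ f A + kernelEnergy μ f B :=
  (lintegral_union_le _ A B).trans <| add_le_add
    (lintegral_mono fun _ => lintegral_mono_set inter_subset_left)
    (lintegral_mono fun _ => lintegral_mono_set inter_subset_right)

theorem IsQuasimetricKernel.kernelEnergy_union_le [IsFiniteMeasure μ]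
    (hf : IsQuasimetricKernel c f) (hc : c ≠ ⊤) {A B : Set M} (hAB : μ (A ∩ B) ≠ 0) :
    kernelEnergy μ f (A ∪ B) ≤
      2 * c * μ (A ∪ B) / μ (A ∩ B) * (kernelEnergy μ f A + kernelEnergy μ f B) := by
  set S := kernelEnergy μ f A + kernelEnergy μ f B
  have hmul : μ (A ∩ B) * kernelEnergy μ f (A ∪ B) ≤ 2 * c * μ (A ∪ B) * S :=
    (hf.measure_mul_kernelEnergy_le hc _ _).trans <| by
      gcongr
      exact setLIntegral_union_inter_le_kernelEnergy_add A B
  calc kernelEnergy μ f (A ∪ B) ≤ 2 * c * μ (A ∪ B) * S / μ (A ∩ B) := by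
        rwa [ENNReal.le_div_iff_mul_le (.inl hAB) (.inl (measure_ne_top μ _)), mul_comm]
    _ = 2 * c * μ (A ∪ B) / μ (A ∩ B) * S := ENNReal.mul_div_right_comm

theorem kernelEnergy_le_mul_kernelEnergy_div {w : M → M → ℝ≥0∞} {D : ℝ≥0∞} (hD₀ : D ≠ 0)
    (hD : D ≠ ⊤) (hw : ∀ x y, w x y ≤ D) (A : Set M) :
    kernelEnergy μ f A ≤ D * kernelEnergy μ (fun x y => f x y / w x y) A :=
  calc kernelEnergy μ f A = ∫⁻ x in A, ∫⁻ y in A, D * (f x y / D) ∂μ ∂μ := by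
        simp only [kernelEnergy, ENNReal.mul_div_cancel hD₀ hD]
    _ ≤ ∫⁻ x in A, ∫⁻ y in A, D * (f x y / w x y) ∂μ ∂μ := by
        gcongr with x y
        exact hw x y
    _ = D * kernelEnergy μ (fun x y => f x y / w x y) A := by
        simp only [kernelEnergy, lintegral_const_mul' _ _ hD]

end Energy

theorem isQuasimetricKernel_edist_rpow {M X : Type*} [MeasurableSpace M] [PseudoEMetricSpace X]
    [MeasurableSpace X] [OpensMeasurableSpace X] {u : M → X} (hu : Measurable u) {p : ℝ}
    (hp : 0 ≤ p) : IsQuasimetricKernel (2 ^ p) fun x y => edist (u x) (u y) ^ p where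
  symm x y := by rw [edist_comm]
  triangle x y z := (ENNReal.rpow_le_rpow (edist_triangle _ (u y) _) hp).trans
    (ENNReal.add_rpow_le_two_rpow_mul_rpow_add_rpow _ _ hp)
  measurable_section _ := (measurable_edist_right.comp hu).pow_const p

section Patching

variable {M ι : Type*} [TopologicalSpace M] [ConnectedSpace M] {U : ι → Set M}

theorem univ_induction_of_finite_open_cover [Finite ι] (hU : ∀ i, IsOpen (U i))
    (hcover : ⋃ i, U i = univ) {P : Set M → Prop} (of_mem_cover : ∀ i, P (U i))
    (union : ∀ A B, IsOpen A → IsOpen B → (A ∩ B).Nonempty → P A → P B → P (A ∪ B)) :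
    P univ := by
  have exists_mem (x : M) : ∃ i, x ∈ U i := mem_iUnion.1 (hcover ▸ mem_univ x)
  obtain ⟨a⟩ : Nonempty M := inferInstance
  obtain ⟨i₀, ha⟩ := exists_mem a
  obtain ⟨J, ⟨hi₀, hPJ⟩, hJmax⟩ :=
    (toFinite {J : Set ι | i₀ ∈ J ∧ P (⋃ i ∈ J, U i)}).exists_maximal
    ⟨{i₀}, mem_singleton i₀, by simpa only [biUnion_singleton] using of_mem_cover i₀⟩
  set V := ⋃ i ∈ J, U i
  have hVo : IsOpen V := isOpen_biUnion fun i _ => hU i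
  have hVc : IsClosed V := by
    refine isClosed_of_closure_subset fun y hy => ?_
    obtain ⟨j, hj⟩ := exists_mem y
    have hmeet : (U j ∩ V).Nonempty := mem_closure_iff.1 hy _ (hU j) hj
    have hPinsert : P (⋃ i ∈ insert j J, U i) := by
      rw [biUnion_insert]
      exact union _ _ (hU j) hVo hmeet (of_mem_cover j) hPJ
    have hjJ : j ∈ J := hJmax ⟨mem_insert_of_mem j hi₀, hPinsert⟩ (subset_insert j J)
      (mem_insert j J)
    exact mem_biUnion hjJ hj
  have hV : V = univ := IsClopen.eq_univ ⟨hVc, hVo⟩ ⟨a, mem_biUnion hi₀ ha⟩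
  exact hV ▸ hPJ

theorem exists_kernelEnergy_univ_le_mul_sum [MeasurableSpace M] [Fintype ι] (μ : Measure M)
    [IsFiniteMeasure μ] [μ.IsOpenPosMeasure] (hU : ∀ i, IsOpen (U i)) (hcover : ⋃ i, U i = univ)
    {c : ℝ≥0∞} (hc : c ≠ ⊤) :
    ∃ K : ℝ≥0∞, K ≠ ⊤ ∧ ∀ f : M → M → ℝ≥0∞, IsQuasimetricKernel c f →
      kernelEnergy μ f univ ≤ K * ∑ i, kernelEnergy μ f (U i) := by
  refine univ_induction_of_finite_open_cover hU hcover
    (P := fun A => ∃ K : ℝ≥0∞, K ≠ ⊤ ∧ ∀ f : M → M → ℝ≥0∞, IsQuasimetricKernel c f →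
      kernelEnergy μ f A ≤ K * ∑ i, kernelEnergy μ f (U i)) ?_ ?_
  · refine fun i => ⟨1, one_ne_top, fun f _ => ?_⟩
    rw [one_mul]
    exact Finset.single_le_sum_of_canonicallyOrdered (f := fun i => kernelEnergy μ f (U i))
      (Finset.mem_univ i)
  · rintro A B hA hB hAB ⟨K, hK, hKA⟩ ⟨L, hL, hLB⟩
    have hpos : μ (A ∩ B) ≠ 0 := (hA.inter hB).measure_ne_zero μ hAB
    refine ⟨2 * c * μ (A ∪ B) / μ (A ∩ B) * (K + L), by finiteness, fun f hf => ?_⟩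
    calc kernelEnergy μ f (A ∪ B)
        ≤ 2 * c * μ (A ∪ B) / μ (A ∩ B) * (kernelEnergy μ f A + kernelEnergy μ f B) :=
          hf.kernelEnergy_union_le hc hpos
      _ ≤ 2 * c * μ (A ∪ B) / μ (A ∩ B) * (K * (∑ i, kernelEnergy μ f (U i))
            + L * ∑ i, kernelEnergy μ f (U i)) := by gcongr; exacts [hKA f hf, hLB f hf]
      _ = 2 * c * μ (A ∪ B) / μ (A ∩ B) * (K + L) * ∑ i, kernelEnergy μ f (U i) := by ring

end Patching

theorem exists_forall_edist_rpow_le (M : Type*) [PseudoMetricSpace M] [BoundedSpace M] {q : ℝ}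
    (hq : 0 ≤ q) : ∃ D : ℝ≥0∞, D ≠ 0 ∧ D ≠ ⊤ ∧ ∀ x y : M, edist x y ^ q ≤ D := by
  have hdiam : Metric.ediam (univ : Set M) ≠ ⊤ := (Bornology.IsBounded.all univ).ediam_ne_top
  refine ⟨Metric.ediam (univ : Set M) ^ q + 1, by positivity, by finiteness, fun x y => ?_⟩
  calc edist x y ^ q ≤ Metric.ediam (univ : Set M) ^ q :=
        ENNReal.rpow_le_rpow (Metric.edist_le_ediam_of_mem (mem_univ x) (mem_univ y)) hq
    _ ≤ Metric.ediam (univ : Set M) ^ q + 1 := le_self_add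

theorem poincare_patching_estimate_general {p q : ℝ} (hp : 0 ≤ p) (hq : 0 ≤ q) {M : Type*}
    [PseudoMetricSpace M] [BoundedSpace M] [ConnectedSpace M] [MeasurableSpace M] (μ : Measure M)
    [IsFiniteMeasure μ] [μ.IsOpenPosMeasure] {ι : Type*} [Fintype ι] {U : ι → Set M}
    (hU : ∀ i, IsOpen (U i)) (hcover : ⋃ i, U i = univ) :
    ∃ C : ℝ, 0 < C ∧
      ∀ (X : Type*) [PseudoEMetricSpace X] [MeasurableSpace X] [OpensMeasurableSpace X]
        (u : M → X), Measurable u →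
        (∫⁻ x, ∫⁻ y, edist (u x) (u y) ^ p ∂μ ∂μ) ≤
          ENNReal.ofReal C *
            ∑ i, ∫⁻ x in U i, ∫⁻ y in U i,
              edist (u x) (u y) ^ p / edist x y ^ q ∂μ ∂μ := by
  obtain ⟨K, hK, hpatch⟩ := exists_kernelEnergy_univ_le_mul_sum μ hU hcover (c := 2 ^ p)
    (by finiteness)
  obtain ⟨D, hD₀, hD, hdist⟩ := exists_forall_edist_rpow_le M hq
  have hKD : K * D ≤ ENNReal.ofReal ((K * D).toReal + 1) :=
    ENNReal.le_ofReal_iff_toReal_le (by finiteness) (by positivity) |>.2 (by linarith)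
  refine ⟨(K * D).toReal + 1, by positivity, fun X _ _ _ u hu => ?_⟩
  set f : M → M → ℝ≥0∞ := fun x y => edist (u x) (u y) ^ p
  set g : M → M → ℝ≥0∞ := fun x y => f x y / edist x y ^ q
  calc ∫⁻ x, ∫⁻ y, f x y ∂μ ∂μ = kernelEnergy μ f univ := by
        simp only [kernelEnergy, Measure.restrict_univ]
    _ ≤ K * ∑ i, kernelEnergy μ f (U i) := hpatch f (isQuasimetricKernel_edist_rpow hu hp)
    _ ≤ K * ∑ i, D * kernelEnergy μ g (U i) := by
        gcongr with i
        exact kernelEnergy_le_mul_kernelEnergy_div hD₀ hD hdist (U i)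
    _ = K * D * ∑ i, kernelEnergy μ g (U i) := by rw [← Finset.mul_sum, mul_assoc]
    _ ≤ ENNReal.ofReal ((K * D).toReal + 1) * ∑ i, kernelEnergy μ g (U i) := by gcongr

/-- **Poincaré-type patching estimate.** Let `0 < s < 1`, `1 ≤ p < ∞`, `m > 0`. Let `M` be a
connected compact metric space with a finite Borel measure `μ` positive on nonempty open
sets, and let `(C_j)` be a finite open cover of `M`. Then there is a constant `C` such that
for every metric space `X` and every Borel measurable `u : M → X`,
`∫_M∫_M d_X(u(x),u(y))^p dμ dμ ≤ C ∑_j ∫_{C_j}∫_{C_j} d_X(u(x),u(y))^p/d(x,y)^{m+sp} dμ dμ`. -/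
theorem poincare_patching_estimate (s p m : ℝ) (hs0 : 0 < s) (hs1 : s < 1) (hp1 : 1 ≤ p)
    (hm : 0 < m) (M : Type*) [MetricSpace M] [CompactSpace M] [ConnectedSpace M]
    [MeasurableSpace M] [BorelSpace M] (μ : Measure M) [IsFiniteMeasure μ]
    (hμ : ∀ U : Set M, IsOpen U → U.Nonempty → 0 < μ U)
    (ι : Type*) [Fintype ι] (Cov : ι → Set M) (hCopen : ∀ j, IsOpen (Cov j))
    (hCcover : univ ⊆ ⋃ j, Cov j) :
    ∃ C : ℝ, 0 < C ∧
      ∀ (X : Type*) [MetricSpace X] [MeasurableSpace X] [BorelSpace X] (u : M → X),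
        Measurable u →
        (∫⁻ x, ∫⁻ y, edist (u x) (u y) ^ p ∂μ ∂μ) ≤
          ENNReal.ofReal C *
            ∑ j : ι, ∫⁻ x in Cov j, ∫⁻ y in Cov j,
              edist (u x) (u y) ^ p / edist x y ^ (m + s * p) ∂μ ∂μ := by
  have : μ.IsOpenPosMeasure := ⟨fun U hU hne => (hμ U hU hne).ne'⟩
  obtain ⟨C, hC, hle⟩ := poincare_patching_estimate_general (p := p) (q := m + s * p)
    (by positivity) (by positivity) μ hCopen (univ_subset_iff.1 hCcover)
  exact ⟨C, hC, fun X _ _ _ => hle X⟩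
end

section
/- Let m ≥ 3, let V ⊆ ℝ^m be an open set, and let Σ ⊆ ℝ^m be an affine subspace whose dimension n satisfies n ≤ m-3. If V is simply connected (as a topological space with the subspace topology), then V ∖ Σ is simply connected. -/
open Set

/-!
A homotopy in `V` between two paths in `V \ Σ` is a map of the square whose restriction to the
boundary avoids `Σ`. It can be uniformly approximated by a `C¹` map, and composing a `C¹` map
`ℝ² → E` with a projection `E → ℝ³` along `Σ` gives a map whose range has dense complement, by the
easy case of Sard's theorem. Hence an arbitrarily small translation of the approximation avoids `Σ`.
Interpolating between the original homotopy near the boundary and the approximation near the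
preimage of `Σ` produces a homotopy in `V \ Σ` with the same boundary values. The same argument
with paths instead of homotopies shows that `V \ Σ` is path-connected.
-/

open Topology unitInterval

/-- A subset `S` of a space `E` is avoidable from `X` if every continuous map `X → E` can be
perturbed off `S`. Perturbations are small in the compact-open topology, which is that of uniform
convergence when `X` is compact and `E` is metric. -/
def IsAvoidable (X : Type*) {E : Type*} [TopologicalSpace X] [TopologicalSpace E] (S : Set E) :
    Prop :=
  Dense {f : C(X, E) | ∀ x, f x ∉ S}

namespace IsAvoidable

section Topological

variable {X Y E : Type*} [TopologicalSpace X] [TopologicalSpace Y] [TopologicalSpace E]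
  {S T : Set E}

theorem mono (hT : IsAvoidable X T) (hST : S ⊆ T) : IsAvoidable X S := by
  refine Dense.mono ?_ hT
  exact fun f hf x hx => hf x (hST hx)

theorem of_retract (hS : IsAvoidable X S) {i : C(Y, X)} {r : C(X, Y)}
    (hri : r.comp i = ContinuousMap.id Y) : IsAvoidable Y S := by
  have hsurj : Function.Surjective fun f : C(X, E) => f.comp i := fun g =>
    ⟨g.comp r, by simp only [ContinuousMap.comp_assoc, hri, ContinuousMap.comp_id]⟩
  refine (hsurj.denseRange.dense_image (ContinuousMap.continuous_precomp i) hS).mono ?_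
  rintro _ ⟨f, hf, rfl⟩ y
  exact hf (i y)

end Topological

section VectorSpace

variable {K E : Type*} [TopologicalSpace K] [CompactSpace K] [T2Space K]
  [TopologicalSpace E] [AddCommGroup E] [Module ℝ E] [IsTopologicalAddGroup E]
  [ContinuousSMul ℝ E] {V S : Set E}

theorem exists_eqOn (havoid : IsAvoidable K S) (hV : IsOpen V) (hS : IsClosed S) (f : C(K, V))
    {B : Set K} (hB : IsClosed B) (hfB : ∀ x ∈ B, (f x : E) ∉ S) :
    ∃ g : C(K, ↥(V \ S)), ∀ x ∈ B, (g x : E) = f x := by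
  let f₀ : C(K, E) := ⟨fun x => f x, by fun_prop⟩
  obtain ⟨U, hU, hSU, hUB⟩ := normal_exists_closure_subset (hS.preimage f₀.continuous)
    hB.isOpen_compl fun x hxS hxB => hfB x hxB hxS
  obtain ⟨r, hrB, hrU, -⟩ := exists_continuous_zero_one_of_isClosed hB isClosed_closure
    (disjoint_compl_right.mono_right hUB)
  let blend (g : C(K, E)) : C(K, E) := f₀ + r • (g - f₀)
  have hblend : Continuous blend :=
    ContinuousMap.continuous_of_continuous_uncurry _ <| by
      change Continuous fun p : C(K, E) × K => f₀ p.2 + r p.2 • (p.1 p.2 - f₀ p.2)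
      fun_prop
  have hblend_self : blend f₀ = f₀ := by simp [blend]
  have hnear_V : ∀ᶠ g in 𝓝 f₀, MapsTo (blend g) univ V :=
    hblend.continuousAt.eventually <| ContinuousMap.eventually_mapsTo isCompact_univ hV <| by
      rw [hblend_self]
      exact fun x _ => (f x).2
  have hnear_S : ∀ᶠ g in 𝓝 f₀, MapsTo (blend g) Uᶜ Sᶜ :=
    hblend.continuousAt.eventually <|
      ContinuousMap.eventually_mapsTo hU.isClosed_compl.isCompact hS.isOpen_compl <| by
        rw [hblend_self]
        exact fun x hxU hxS => hxU (hSU hxS)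
  obtain ⟨g, hg, hgV, hgS⟩ := havoid.inter_nhds_nonempty (hnear_V.and hnear_S)
  have hblend_notMem (x : K) : blend g x ∉ S := by
    by_cases hxU : x ∈ U
    · have hrx : r x = 1 := hrU (subset_closure hxU)
      simpa [blend, hrx] using hg x
    · exact hgS hxU
  refine ⟨⟨fun x => ⟨blend g x, hgV (mem_univ x), hblend_notMem x⟩, by fun_prop⟩, fun x hx => ?_⟩
  have hrx : r x = 0 := hrB hx
  simp [blend, hrx, f₀]

end VectorSpace


section Paths

variable {E : Type*} [TopologicalSpace E] [AddCommGroup E] [Module ℝ E] [IsTopologicalAddGroup E]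
  [ContinuousSMul ℝ E] {V S : Set E}

theorem joined_diff (havoid : IsAvoidable I S) (hV : IsOpen V) (hS : IsClosed S)
    {x y : ↥(V \ S)} (hxy : Joined (inclusion sdiff_subset x : V) (inclusion sdiff_subset y)) :
    Joined x y := by
  obtain ⟨γ⟩ := hxy
  have hends : ∀ t ∈ ({0, 1} : Set I), (γ t : E) ∉ S := by
    rintro t (rfl | rfl)
    · simpa using x.2.2
    · simpa using y.2.2
  obtain ⟨g, hg⟩ := havoid.exists_eqOn hV hS γ.toContinuousMap (toFinite {0, 1}).isClosed hends
  refine ⟨⟨g, Subtype.ext ?_, Subtype.ext ?_⟩⟩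
  · simpa using hg 0 (by simp)
  · simpa using hg 1 (by simp)

theorem pathConnectedSpace_diff [PathConnectedSpace V] (havoid : IsAvoidable I S) (hV : IsOpen V)
    (hS : IsClosed S) : PathConnectedSpace ↥(V \ S) where
  nonempty := by
    obtain ⟨v⟩ : Nonempty V := PathConnectedSpace.nonempty
    obtain ⟨g, -⟩ := havoid.exists_eqOn hV hS (.const I v) isClosed_empty (by simp)
    exact ⟨g 0⟩
  joined _ _ := havoid.joined_diff hV hS (PathConnectedSpace.joined _ _)

theorem homotopic_diff (havoid : IsAvoidable (I × I) S) (hV : IsOpen V) (hS : IsClosed S)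
    {x y : ↥(V \ S)} {p q : Path x y}
    (hpq : (p.map (continuous_inclusion sdiff_subset)).Homotopic
      (q.map (continuous_inclusion (sdiff_subset : V \ S ⊆ V)))) :
    p.Homotopic q := by
  obtain ⟨h⟩ := hpq
  let boundary : Set (I × I) := {z | z.1 ∈ ({0, 1} : Set I) ∨ z.2 ∈ ({0, 1} : Set I)}
  have hclosed : IsClosed boundary :=
    ((toFinite {0, 1}).isClosed.preimage continuous_fst).union
      ((toFinite {0, 1}).isClosed.preimage continuous_snd)
  have hboundary : ∀ z ∈ boundary, (h z : E) ∉ S := by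
    rintro ⟨s, t⟩ ((rfl | rfl) | (rfl | rfl))
    · simpa using (p t).2.2
    · simpa using (q t).2.2
    · simpa using x.2.2
    · simpa using y.2.2
  obtain ⟨g, hg⟩ := havoid.exists_eqOn hV hS h.toContinuousMap hclosed hboundary
  refine ⟨⟨⟨g, fun t => Subtype.ext ?_, fun t => Subtype.ext ?_⟩, ?_⟩⟩
  · simpa using hg (0, t) (by simp [boundary])
  · simpa using hg (1, t) (by simp [boundary])
  · rintro s t (rfl | rfl) <;> apply Subtype.ext
    · simpa using hg (s, 0) (by simp [boundary])
    · simpa using hg (s, 1) (by simp [boundary])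

theorem simplyConnectedSpace_diff [SimplyConnectedSpace V] (havoid : IsAvoidable (I × I) S)
    (hV : IsOpen V) (hS : IsClosed S) : SimplyConnectedSpace ↥(V \ S) := by
  have havoid_I : IsAvoidable I S :=
    havoid.of_retract (i := .prodMk (.id I) (.const I 0)) (r := .fst) rfl
  exact simply_connected_iff_paths_homotopic'.2 ⟨havoid_I.pathConnectedSpace_diff hV hS,
    fun _ _ => havoid.homotopic_diff hV hS (SimplyConnectedSpace.paths_homotopic _ _)⟩

end Paths

end IsAvoidable

section GeneralPosition

variable {E : Type*} [NormedAddCommGroup E] [NormedSpace ℝ E]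

theorem exists_isOpenMap_le_ker_of_le_rank_quotient {p : Submodule ℝ E}
    (hp : IsClosed (p : Set E)) {n : ℕ} (hn : n ≤ Module.rank ℝ (E ⧸ p)) :
    ∃ L : E →L[ℝ] (Fin n → ℝ), IsOpenMap L ∧ p ≤ L.ker := by
  obtain ⟨f, hf⟩ := Module.le_rank_iff_exists_linearMap.1 hn
  let e : f.range ≃L[ℝ] (Fin n → ℝ) :=
    (LinearEquiv.ofInjective f hf).symm.toContinuousLinearEquiv
  obtain ⟨g, hg⟩ := e.toContinuousLinearMap.exist_extension_of_finiteDimensional_range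
  have hg_surj : Function.Surjective g := fun y =>
    ⟨e.symm y, by simpa using (DFunLike.congr_fun hg (e.symm y)).symm⟩
  refine ⟨g.comp p.mkQL, ?_, fun x hx => ?_⟩
  · exact (g.toLinearMap.isOpenMap_of_finiteDimensional hg_surj).comp
      p.isOpenQuotientMap_mkQL.isOpenMap
  · simp [(Submodule.Quotient.mk_eq_zero p).2 hx]

variable {W : Type*} [NormedAddCommGroup W] [NormedSpace ℝ W] [FiniteDimensional ℝ W]

-- Unlike `ContinuousMap.dense_setOfPred_contDiff`, this does not assume `E` complete.
theorem dense_setOf_contDiff (n : ℕ∞) : Dense {f : C(W, E) | ContDiff ℝ n f} := by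
  intro f
  choose g hg hgf _ using fun k : ℕ => f.continuous.exists_contDiff_approx n
    (continuous_const (y := 1 / ((k : ℝ) + 1))) fun _ => Nat.one_div_pos_of_nat
  let G (k : ℕ) : C(W, E) := ⟨g k, (hg k).continuous⟩
  have hunif : TendstoUniformly (fun k => ⇑(G k)) f Filter.atTop := by
    refine Metric.tendstoUniformly_iff.2 fun ε hε => ?_
    filter_upwards [tendsto_one_div_add_atTop_nhds_zero_nat.eventually_lt_const hε] with k hk x
    rw [dist_comm]
    exact (hgf k x).trans hk
  exact mem_closure_of_tendsto
    (ContinuousMap.tendsto_of_tendstoLocallyUniformly hunif.tendstoLocallyUniformly)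
    (.of_forall hg)

theorem dense_setOf_forall_sub_notMem {A : AffineSubspace ℝ E} (hA : IsClosed (A : Set E))
    (hcodim : Module.finrank ℝ W < Module.rank ℝ (E ⧸ A.direction)) {f : W → E}
    (hf : ContDiff ℝ 1 f) : Dense {v : E | ∀ x, f x - v ∉ A} := by
  obtain rfl | ⟨a, ha⟩ := A.eq_bot_or_nonempty
  · exact dense_univ.mono fun _ _ _ => AffineSubspace.notMem_bot ℝ E _
  have hrank : (Module.finrank ℝ W + 1 : ℕ) ≤ Module.rank ℝ (E ⧸ A.direction) :=
    mod_cast Cardinal.natCast_add_one_le_iff.2 hcodim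
  obtain ⟨L, hL_open, hL_ker⟩ :=
    exists_isOpenMap_le_ker_of_le_rank_quotient (A.isClosed_direction_iff.2 hA) hrank
  have hsard : Dense (range fun x => L (f x - a))ᶜ :=
    ContDiff.dense_compl_range_of_finrank_lt_finrank
      (L.contDiff.comp (hf.sub contDiff_const)) (by simp)
  refine (hsard.preimage hL_open).mono fun v (hv : L v ∉ range _) x hx => hv ⟨x, ?_⟩
  have hker : L (f x - v - a) = 0 := hL_ker (A.vsub_mem_direction hx ha)
  calc L (f x - a) = L (f x - v - a) + L v := by rw [← map_add]; congr 1; abel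
    _ = L v := by rw [hker, zero_add]

theorem isAvoidable_affineSubspace {A : AffineSubspace ℝ E} (hA : IsClosed (A : Set E))
    (hcodim : Module.finrank ℝ W < Module.rank ℝ (E ⧸ A.direction)) :
    IsAvoidable W (A : Set E) := by
  refine Dense.of_closure ((dense_setOf_contDiff 1).mono fun f (hf : ContDiff ℝ 1 f) => ?_)
  let translate (v : E) : C(W, E) := f - .const W v
  have htranslate : Continuous translate := by fun_prop
  have hzero : translate 0 = f := by ext; simp [translate]
  have hmem : translate 0 ∈ closure (translate '' {v | ∀ x, f x - v ∉ A}) :=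
    mem_closure_image htranslate.continuousAt (dense_setOf_forall_sub_notMem hA hcodim hf 0)
  rw [hzero] at hmem
  refine closure_mono ?_ hmem
  rintro _ ⟨v, hv, rfl⟩
  exact hv

end GeneralPosition

theorem simplyConnected_diff_affineSubspace_general {E : Type*} [NormedAddCommGroup E]
    [NormedSpace ℝ E] {V S : Set E} (hV : IsOpen V) (hS : IsClosed S) (A : AffineSubspace ℝ E)
    (hA : IsClosed (A : Set E)) (hSA : S ⊆ A) (hcodim : 3 ≤ Module.rank ℝ (E ⧸ A.direction))
    [SimplyConnectedSpace V] : SimplyConnectedSpace ↥(V \ S) := by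
  have hplane : IsAvoidable (ℝ × ℝ) S := by
    refine (isAvoidable_affineSubspace hA ?_).mono hSA
    simpa using lt_of_lt_of_le (by norm_num) hcodim
  have hsquare : IsAvoidable (I × I) S := hplane.of_retract
    (i := ⟨Prod.map (↑) (↑), by fun_prop⟩)
    (r := ⟨Prod.map (projIcc 0 1 zero_le_one) (projIcc 0 1 zero_le_one), by fun_prop⟩)
    (by ext <;> simp)
  exact hsquare.simplyConnectedSpace_diff hV hS

/-- Removing an affine subspace of codimension at least `3` from a simply connected open
subset of `ℝ^m` keeps it simply connected. -/
theorem simplyConnected_diff_affineSubspace (m : ℕ) (hm : 3 ≤ m)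
    (V : Set (EuclideanSpace ℝ (Fin m))) (hV : IsOpen V)
    (Sig : AffineSubspace ℝ (EuclideanSpace ℝ (Fin m)))
    (hSigne : (Sig : Set (EuclideanSpace ℝ (Fin m))).Nonempty)
    (hdim : Module.finrank ℝ Sig.direction ≤ m - 3)
    (hVsc : SimplyConnectedSpace V) :
    SimplyConnectedSpace ↥(V \ (Sig : Set (EuclideanSpace ℝ (Fin m)))) := by
  have hquot := Sig.direction.finrank_quotient_add_finrank
  rw [finrank_euclideanSpace_fin] at hquot
  have hcodim : 3 ≤ Module.finrank ℝ (EuclideanSpace ℝ (Fin m) ⧸ Sig.direction) := by omega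
  exact simplyConnected_diff_affineSubspace_general hV Sig.closed_of_finiteDimensional Sig
    Sig.closed_of_finiteDimensional subset_rfl
    (by rw [← Module.finrank_eq_rank]; exact_mod_cast hcodim)
end

section
/- Let 0<s<1 and 1≤p<∞ satisfy sp ≥ 1, and let m ≥ 1. Let (Ñ, d_Ñ) and (N, d_N) be metric spaces and π : Ñ → N be nonexpansive and an isometry at scale ρ>0 (i.e. d_N(π(a),π(b)) ≤ d_Ñ(a,b) for all a,b, with equality whenever d_Ñ(a,b) ≤ ρ). Let Ω ⊆ ℝ^m be a connected open set and let ũ, ṽ : Ω → Ñ be Borel measurable maps which belong to W^{s,p}_loc(Ω, Ñ) and satisfy π ∘ ũ = π ∘ ṽ almost everywhere on Ω. Then either ũ = ṽ almost everywhere on Ω, or ũ(x) ≠ ṽ(x) for almost every x ∈ Ω. -/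
open MeasureTheory Set ENNReal

/-- The Gagliardo `W^{s,p}` double integral of a map `w : ℝ^m → X` on a set `A`. -/
noncomputable def gagliardoIntegral {m : ℕ} {X : Type*} [PseudoEMetricSpace X] (s p : ℝ)
    (A : Set (EuclideanSpace ℝ (Fin m))) (w : EuclideanSpace ℝ (Fin m) → X) : ℝ≥0∞ :=
  ∫⁻ x in A, ∫⁻ y in A, edist (w x) (w y) ^ p / edist x y ^ ((m : ℝ) + s * p)

/-- `w ∈ W^{s,p}_loc(Ω, X)`: every point of `Ω` has an open neighborhood in `Ω` on which the
Gagliardo double integral is finite. -/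
def MemWsplocOn {m : ℕ} {X : Type*} [PseudoEMetricSpace X] (s p : ℝ)
    (Ω : Set (EuclideanSpace ℝ (Fin m))) (w : EuclideanSpace ℝ (Fin m) → X) : Prop :=
  ∀ x ∈ Ω, ∃ U : Set (EuclideanSpace ℝ (Fin m)),
    IsOpen U ∧ x ∈ U ∧ U ⊆ Ω ∧ gagliardoIntegral s p U w < ∞

/-!
Put `q = m + sp ≥ m + 1` and let `D` be a ball on which both Gagliardo integrals are finite. Almost
everywhere on `D` the maps `ũ` and `ṽ` either agree or are at distance at least `ρ`. Let `A ⊆ D` be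
the agreement set and `B = D \ A`. For `x ∈ A` and `y ∈ B` one of the maps jumps by at least `ρ / 2`
between `x` and `y`, so the measure `|x - y|^{-q} dx dy` of `A × B` is finite. The midpoint of such
a pair lies in `A` or in `B`, hence forms with one of the two endpoints a pair of `A × B` at half
the distance. Scaling turns this into the statement that the pairs at distance `< t` carry at most
`2 * 2^{m - q} ≤ 1` times the mass of the pairs at distance `< t / 2`. As that mass
tends to `0` with `t`, iterating shows that they carry no mass at all, and `A` or `B` is null.
Connectedness of `Ω` makes the alternative global.

The target need not be separable. But the kernel `|x - y|^{-q}` is not integrable near `x`, so a map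
with finite Gagliardo integral takes a.e. its values in the support of its image measure, which is
separable; this gives the strong measurability behind the product integrals above.
-/

open Filter Topology
open scoped NNReal

/-- The pairs in `A × B` at distance less than `t`: as `t → 0` these are the pairs that see the
interface between `A` and `B`. -/
def closePairs {X : Type*} [PseudoMetricSpace X] (A B : Set X) (t : ℝ) : Set (X × X) :=
  {z ∈ A ×ˢ B | dist z.1 z.2 < t}

/-- The measure `|x - y|^{-q} dx dy` on pairs of points; for `q > 0` its density is `∞` on the
diagonal. For `q = m + sp` the Gagliardo integral of `w` on `A` is the integral of
`d(w x, w y)^p` over `A × A` against it. -/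
noncomputable def rieszPairMeasure {X : Type*} [PseudoEMetricSpace X] [MeasurableSpace X]
    (μ : Measure X) (q : ℝ) : Measure (X × X) :=
  (μ.prod μ).withDensity fun z ↦ (edist z.1 z.2 ^ q)⁻¹

section ClosePairs

variable {X : Type*} [PseudoMetricSpace X]

lemma closePairs_mono (A B : Set X) : Monotone (closePairs A B) :=
  fun _ _ hst _ hz ↦ ⟨hz.1, hz.2.trans_le hst⟩

lemma iUnion_closePairs_natCast (A B : Set X) : ⋃ n : ℕ, closePairs A B n = A ×ˢ B := by
  refine subset_antisymm (iUnion_subset fun n ↦ sep_subset _ _) fun z hz ↦ ?_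
  obtain ⟨n, hn⟩ := exists_nat_gt (dist z.1 z.2)
  exact mem_iUnion.2 ⟨n, hz, hn⟩

lemma measurableSet_closePairs [MeasurableSpace X] [OpensMeasurableSpace X]
    [SecondCountableTopology X] {A B : Set X} (hA : MeasurableSet A) (hB : MeasurableSet B)
    (t : ℝ) : MeasurableSet (closePairs A B t) :=
  (hA.prod hB).inter (measurableSet_lt (f := fun z : X × X ↦ dist z.1 z.2)
    (by fun_prop) measurable_const)

variable {Y : Type*} [MetricSpace Y]

lemma biInter_closePairs_eq_empty {A B : Set Y} (hAB : Disjoint A B) :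
    ⋂ t > 0, closePairs A B t = ∅ := by
  refine eq_empty_of_forall_notMem fun z hz ↦ ?_
  rw [mem_iInter₂] at hz
  obtain ⟨⟨hA, hB⟩, -⟩ := hz 1 one_pos
  exact (hz _ (dist_pos.2 (hAB.ne_of_mem hA hB))).2.false

lemma tendsto_measure_closePairs_zero [MeasurableSpace Y] [OpensMeasurableSpace Y]
    [SecondCountableTopology Y] {A B : Set Y} (hA : MeasurableSet A) (hB : MeasurableSet B)
    (hAB : Disjoint A B) {ν : Measure (Y × Y)} (hν : ν (A ×ˢ B) ≠ ∞) :
    Tendsto (fun t ↦ ν (closePairs A B t)) (𝓝[>] 0) (𝓝 0) := by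
  have h := tendsto_measure_biInter_gt (μ := ν) (a := (0 : ℝ))
    (fun t _ ↦ (measurableSet_closePairs hA hB t).nullMeasurableSet)
    (fun _ _ _ hst ↦ closePairs_mono A B hst)
    ⟨1, one_pos, measure_ne_top_of_subset (sep_subset _ _) hν⟩
  rwa [biInter_closePairs_eq_empty hAB, measure_empty] at h

end ClosePairs

section RieszPairMeasure

lemma restrict_rieszPairMeasure_absolutelyContinuous {X : Type*} [PseudoEMetricSpace X]
    [MeasurableSpace X] (μ : Measure X) [SFinite μ] (q : ℝ) (A B : Set X) :
    (rieszPairMeasure μ q).restrict (A ×ˢ B) ≪ (μ.restrict A).prod (μ.restrict B) := by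
  rw [rieszPairMeasure, restrict_withDensity', ← Measure.prod_restrict]
  exact withDensity_absolutelyContinuous _ _

variable {X : Type*} [PseudoMetricSpace X] [MeasurableSpace X] [OpensMeasurableSpace X]
  [SecondCountableTopology X]

lemma measurable_inv_edist_rpow (q : ℝ) : Measurable fun z : X × X ↦ (edist z.1 z.2 ^ q)⁻¹ := by
  fun_prop

lemma absolutelyContinuous_rieszPairMeasure (μ : Measure X) {q : ℝ} (hq : 0 ≤ q) :
    μ.prod μ ≪ rieszPairMeasure μ q :=
  withDensity_absolutelyContinuous' (measurable_inv_edist_rpow q).aemeasurable <| ae_of_all _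
    fun _ ↦ ENNReal.inv_ne_zero.2 (ENNReal.rpow_ne_top_of_nonneg hq (edist_ne_top _ _))

lemma rieszPairMeasure_preimage_swap (μ : Measure X) [SFinite μ] (q : ℝ) {S : Set (X × X)}
    (hS : MeasurableSet S) :
    rieszPairMeasure μ q (Prod.swap ⁻¹' S) = rieszPairMeasure μ q S := by
  rw [rieszPairMeasure, withDensity_apply _ (measurable_swap hS), withDensity_apply _ hS,
    ← (Measure.measurePreserving_swap (μ := μ) (ν := μ)).setLIntegral_comp_preimage hS
      (measurable_inv_edist_rpow q)]
  simp only [Prod.fst_swap, Prod.snd_swap, edist_comm]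

end RieszPairMeasure

section Midpoint

variable {E : Type*} [NormedAddCommGroup E] [NormedSpace ℝ E]

lemma edist_left_midpoint (x y : E) : edist x (midpoint ℝ x y) = 2⁻¹ * edist x y := by
  rw [edist_dist, dist_left_midpoint, ENNReal.ofReal_mul (by positivity), ← edist_dist,
    Real.norm_ofNat, ENNReal.ofReal_inv_of_pos two_pos, ENNReal.ofReal_ofNat]

lemma closePairs_subset_preimage_midpoint {A B : Set E} (hAB : Convex ℝ (A ∪ B)) (t : ℝ) :
    closePairs A B t ⊆ (fun z ↦ (z.1, midpoint ℝ z.1 z.2)) ⁻¹' closePairs A B (t / 2) ∪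
      (fun z ↦ (midpoint ℝ z.1 z.2, z.2)) ⁻¹' closePairs A B (t / 2) := by
  rintro ⟨x, y⟩ ⟨⟨hx, hy⟩, hxy⟩
  dsimp only at hx hy hxy
  rcases hAB.midpoint_mem (.inl hx) (.inr hy) with hmid | hmid
  · refine .inr ⟨⟨hmid, hy⟩, ?_⟩
    rw [dist_midpoint_right, Real.norm_ofNat]
    linarith
  · refine .inl ⟨⟨hx, hmid⟩, ?_⟩
    rw [dist_left_midpoint, Real.norm_ofNat]
    linarith

variable [MeasurableSpace E] [BorelSpace E] [FiniteDimensional ℝ E]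
  (μ : Measure E) [μ.IsAddHaarMeasure]

local notation "d" => Module.finrank ℝ E

lemma map_midpoint_addHaar (x : E) : μ.map (midpoint ℝ x) = (2 : ℝ≥0∞) ^ d • μ := by
  have hcomp : midpoint ℝ x = ((2⁻¹ : ℝ) • x + ·) ∘ ((2⁻¹ : ℝ) • ·) := by
    ext y
    simp [midpoint_eq_smul_add]
  rw [hcomp, ← Measure.map_map (by fun_prop) (by fun_prop),
    Measure.map_addHaar_smul μ (by norm_num), Measure.map_smul, map_add_left_eq_self, inv_pow,
    inv_inv, abs_of_pos (by positivity), ENNReal.ofReal_pow zero_le_two, ENNReal.ofReal_ofNat]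

lemma measurePreserving_prodMk_midpoint :
    MeasurePreserving (fun z : E × E ↦ (z.1, midpoint ℝ z.1 z.2)) (μ.prod μ)
      (μ.prod ((2 : ℝ≥0∞) ^ d • μ)) :=
  (MeasurePreserving.id μ).skew_product (g := fun x y ↦ midpoint ℝ x y)
    (by simp only [midpoint_eq_smul_add, Function.uncurry_def]; fun_prop)
    (ae_of_all _ (map_midpoint_addHaar μ))

lemma rieszPairMeasure_preimage_prodMk_midpoint (q : ℝ) {S : Set (E × E)} (hS : MeasurableSet S) :
    rieszPairMeasure μ q ((fun z ↦ (z.1, midpoint ℝ z.1 z.2)) ⁻¹' S) =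
      2 ^ (d - q) * rieszPairMeasure μ q S := by
  have hT := measurePreserving_prodMk_midpoint μ
  have hk := measurable_inv_edist_rpow (X := E) q
  have hscale (z : E × E) : (edist z.1 z.2 ^ q)⁻¹ =
      2 ^ (-q) * (edist z.1 (midpoint ℝ z.1 z.2) ^ q)⁻¹ := by
    rw [edist_left_midpoint, ENNReal.mul_rpow_of_ne_top (by simp) (edist_ne_top _ _),
      ENNReal.mul_inv (by simp) (by simp), ← mul_assoc, ENNReal.inv_rpow, inv_inv,
      ← ENNReal.rpow_add _ _ two_ne_zero ofNat_ne_top, neg_add_cancel, ENNReal.rpow_zero, one_mul]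
  rw [rieszPairMeasure, withDensity_apply _ (hT.measurable hS), withDensity_apply _ hS]
  calc ∫⁻ z in (fun z ↦ (z.1, midpoint ℝ z.1 z.2)) ⁻¹' S, (edist z.1 z.2 ^ q)⁻¹ ∂μ.prod μ
      = 2 ^ (-q) * ∫⁻ z in (fun z ↦ (z.1, midpoint ℝ z.1 z.2)) ⁻¹' S,
          (edist z.1 (midpoint ℝ z.1 z.2) ^ q)⁻¹ ∂μ.prod μ :=
        (lintegral_congr hscale).trans (lintegral_const_mul _ (hk.comp hT.measurable))
    _ = 2 ^ (-q) * (2 ^ d * ∫⁻ z in S, (edist z.1 z.2 ^ q)⁻¹ ∂μ.prod μ) := by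
        rw [hT.setLIntegral_comp_preimage hS hk, Measure.prod_smul_right,
          setLIntegral_smul_measure, smul_eq_mul]
    _ = 2 ^ (d - q) * ∫⁻ z in S, (edist z.1 z.2 ^ q)⁻¹ ∂μ.prod μ := by
        rw [← mul_assoc, ← ENNReal.rpow_natCast, ← ENNReal.rpow_add _ _ two_ne_zero ofNat_ne_top,
          neg_add_eq_sub]

lemma rieszPairMeasure_preimage_midpoint_prodMk (q : ℝ) {S : Set (E × E)} (hS : MeasurableSet S) :
    rieszPairMeasure μ q ((fun z ↦ (midpoint ℝ z.1 z.2, z.2)) ⁻¹' S) =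
      2 ^ (d - q) * rieszPairMeasure μ q S := by
  have hswap : (fun z : E × E ↦ (midpoint ℝ z.1 z.2, z.2)) ⁻¹' S = Prod.swap ⁻¹'
      ((fun z : E × E ↦ (z.1, midpoint ℝ z.1 z.2)) ⁻¹' (Prod.swap ⁻¹' S)) := by
    ext z
    simp [midpoint_comm]
  have hS' := measurable_swap hS
  rw [hswap, rieszPairMeasure_preimage_swap μ q
      ((measurePreserving_prodMk_midpoint μ).measurable hS'),
    rieszPairMeasure_preimage_prodMk_midpoint μ q hS', rieszPairMeasure_preimage_swap μ q hS]

variable {μ} {q : ℝ} {A B : Set E}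

lemma rieszPairMeasure_closePairs_le_half (hq : d + 1 ≤ q) (hA : MeasurableSet A)
    (hB : MeasurableSet B) (hconv : Convex ℝ (A ∪ B)) (t : ℝ) :
    rieszPairMeasure μ q (closePairs A B t) ≤ rieszPairMeasure μ q (closePairs A B (t / 2)) := by
  set ν := rieszPairMeasure μ q
  have hmeas := measurableSet_closePairs hA hB (t / 2)
  calc ν (closePairs A B t)
      ≤ 2 ^ (d - q) * ν (closePairs A B (t / 2)) + 2 ^ (d - q) * ν (closePairs A B (t / 2)) := by
        refine (measure_mono (closePairs_subset_preimage_midpoint hconv t)).trans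
          ((measure_union_le _ _).trans_eq ?_)
        rw [rieszPairMeasure_preimage_prodMk_midpoint μ q hmeas,
          rieszPairMeasure_preimage_midpoint_prodMk μ q hmeas]
    _ = 2 ^ (d - q + 1) * ν (closePairs A B (t / 2)) := by
        rw [ENNReal.rpow_add _ _ two_ne_zero ofNat_ne_top, ENNReal.rpow_one]
        ring
    _ ≤ 1 * ν (closePairs A B (t / 2)) := by
        gcongr
        exact (ENNReal.rpow_le_rpow_of_exponent_le one_le_two (by linarith)).trans_eq
          ENNReal.rpow_zero
    _ = ν (closePairs A B (t / 2)) := one_mul _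

lemma rieszPairMeasure_closePairs_eq_zero (hq : d + 1 ≤ q) (hA : MeasurableSet A)
    (hB : MeasurableSet B) (hAB : Disjoint A B) (hconv : Convex ℝ (A ∪ B))
    (hfin : rieszPairMeasure μ q (A ×ˢ B) ≠ ∞) {t : ℝ} (ht : 0 < t) :
    rieszPairMeasure μ q (closePairs A B t) = 0 := by
  have hiter (n : ℕ) : rieszPairMeasure μ q (closePairs A B t) ≤
      rieszPairMeasure μ q (closePairs A B (t / 2 ^ n)) := by
    induction n with
    | zero => simp
    | succ n ih =>
      rw [pow_succ, ← div_div]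
      exact ih.trans (rieszPairMeasure_closePairs_le_half hq hA hB hconv _)
  have hscale : Tendsto (fun n : ℕ ↦ t / 2 ^ n) atTop (𝓝[>] 0) :=
    tendsto_nhdsWithin_iff.2 ⟨tendsto_const_nhds.div_atTop
      (tendsto_pow_atTop_atTop_of_one_lt one_lt_two), .of_forall fun n ↦ div_pos ht (by positivity)⟩
  exact nonpos_iff_eq_zero.1 <| ge_of_tendsto'
    ((tendsto_measure_closePairs_zero hA hB hAB hfin).comp hscale) hiter

theorem measure_eq_zero_or_of_rieszPairMeasure_prod_ne_top (hq : d + 1 ≤ q)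
    (hA : MeasurableSet A) (hB : MeasurableSet B) (hAB : Disjoint A B) (hconv : Convex ℝ (A ∪ B))
    (hfin : rieszPairMeasure μ q (A ×ˢ B) ≠ ∞) : μ A = 0 ∨ μ B = 0 := by
  have hclose (n : ℕ) : rieszPairMeasure μ q (closePairs A B n) = 0 :=
    measure_mono_null (closePairs_mono A B (by linarith : (n : ℝ) ≤ n + 1))
      (rieszPairMeasure_closePairs_eq_zero hq hA hB hAB hconv hfin (by positivity))
  have hnull : rieszPairMeasure μ q (A ×ˢ B) = 0 := by
    rw [← iUnion_closePairs_natCast]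
    exact measure_iUnion_null hclose
  have hq0 : 0 ≤ q := le_trans (by positivity) hq
  rw [← mul_eq_zero, ← Measure.prod_prod]
  exact absolutelyContinuous_rieszPairMeasure μ hq0 hnull

theorem setLIntegral_inv_edist_rpow_eq_top (hq : d < q) {U : Set E} {x : E} (hU : U ∈ 𝓝 x) :
    ∫⁻ y in U, (edist x y ^ q)⁻¹ ∂μ = ∞ := by
  obtain ⟨R, hR, hball⟩ := Metric.mem_nhds_iff.1 hU
  have hlower : ∀ r ∈ Ioo 0 R, ENNReal.ofReal (r ^ (d - q)) * μ (Metric.ball 0 1) ≤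
      ∫⁻ y in U, (edist x y ^ q)⁻¹ ∂μ := fun r ⟨hr, hrR⟩ ↦ by
    have hr_le (y) (hy : y ∈ Metric.ball x r) : ENNReal.ofReal (r ^ (-q)) ≤ (edist x y ^ q)⁻¹ := by
      rw [Real.rpow_neg hr.le, ENNReal.ofReal_inv_of_pos (by positivity),
        ← ENNReal.ofReal_rpow_of_pos hr, edist_dist, dist_comm]
      have : 0 ≤ q := hq.le.trans' (by positivity)
      gcongr
      exact (Metric.mem_ball.1 hy).le
    calc ENNReal.ofReal (r ^ (d - q)) * μ (Metric.ball 0 1)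
        = ∫⁻ _ in Metric.ball x r, ENNReal.ofReal (r ^ (-q)) ∂μ := by
          rw [setLIntegral_const, Measure.addHaar_ball_of_pos μ x hr, ← mul_assoc,
            ← ENNReal.ofReal_mul (by positivity), ← Real.rpow_natCast, ← Real.rpow_add hr,
            neg_add_eq_sub]
      _ ≤ ∫⁻ y in Metric.ball x r, (edist x y ^ q)⁻¹ ∂μ :=
          setLIntegral_mono' measurableSet_ball hr_le
      _ ≤ _ := lintegral_mono_set ((Metric.ball_subset_ball hrR.le).trans hball)
  have hblowup : Tendsto (fun r : ℝ ↦ ENNReal.ofReal (r ^ (d - q)) * μ (Metric.ball 0 1))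
      (𝓝[>] 0) (𝓝 (∞ * μ (Metric.ball 0 1))) :=
    ENNReal.Tendsto.mul_const (ENNReal.tendsto_ofReal_atTop.comp
      (tendsto_rpow_neg_nhdsGT_zero (by linarith))) (.inl top_ne_zero)
  rw [ENNReal.top_mul (Metric.measure_ball_pos μ 0 one_pos).ne'] at hblowup
  exact top_le_iff.1 <| le_of_tendsto hblowup <|
    Filter.mem_of_superset (Ioo_mem_nhdsGT hR) hlower

end Midpoint

section Support

variable {X : Type*} [PseudoEMetricSpace X]

lemma exists_maximal_isSeparated (ε : ℝ≥0∞) (s : Set X) :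
    ∃ M, Maximal (fun N ↦ N ⊆ s ∧ Metric.IsSeparated ε N) M :=
  zorn_subset _ fun c hc hchain ↦ ⟨⋃₀ c, ⟨sUnion_subset fun _ ht ↦ (hc ht).1,
    (pairwise_sUnion hchain.directedOn).2 fun _ ht ↦ (hc ht).2⟩, fun _ ↦ subset_sUnion_of_mem⟩

variable [MeasurableSpace X] [OpensMeasurableSpace X]

lemma countable_of_isSeparated_of_subset_support {μ : Measure X} [SFinite μ] {ε : ℝ≥0∞}
    (hε : ε ≠ 0) {M : Set X} (hM : Metric.IsSeparated ε M) (hMμ : M ⊆ μ.support) :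
    M.Countable := by
  have hdisj : Pairwise fun i j : M ↦
      Disjoint (Metric.eball (i : X) (ε / 2)) (Metric.eball (j : X) (ε / 2)) := fun i j hij ↦
    Metric.eball_disjoint <|
      (ENNReal.add_halves ε).trans_le (hM i.2 j.2 (Subtype.coe_ne_coe.2 hij)).le
  have hpos (i : M) : 0 < μ (Metric.eball (i : X) (ε / 2)) :=
    (Measure.mem_support_iff_forall _).1 (hMμ i.2) _
      (Metric.eball_mem_nhds _ (ENNReal.half_pos hε))
  have hcount := Measure.countable_meas_pos_of_disjoint_iUnion (μ := μ)
    (fun _ ↦ Metric.isOpen_eball.measurableSet) hdisj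
  exact countable_coe_iff.1 (countable_univ_iff.1 (hcount.mono fun i _ ↦ hpos i))

/-- Covering the support by an arbitrary maximal separated subset, rather than by a countable dense
subset of the space, is what makes this work in a non-separable space. -/
theorem isSeparable_support (μ : Measure X) [SFinite μ] :
    TopologicalSpace.IsSeparable μ.support := by
  obtain ⟨t, -, ht, hsub⟩ := EMetric.subset_countable_closure_of_almost_dense_set μ.support <| by
    intro ε hε
    obtain ⟨δ, hδ, hδε⟩ := ENNReal.lt_iff_exists_nnreal_btwn.1 hε
    obtain ⟨M, hM⟩ := exists_maximal_isSeparated (δ : ℝ≥0∞) μ.support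
    refine ⟨M, countable_of_isSeparated_of_subset_support hδ.ne' hM.1.2 hM.1.1, ?_⟩
    exact (Metric.isCover_iff_subset_iUnion_closedEBall.1 (.of_maximal_isSeparated hM)).trans
      (iUnion₂_mono fun _ _ ↦ Metric.closedEBall_subset_closedEBall hδε.le)
  exact ⟨t, ht, hsub⟩

lemma exists_ae_le_edist_of_notMem_support_map {α : Type*} [MeasurableSpace α] {μ : Measure α}
    {w : α → X} (hw : AEMeasurable w μ) {a : X} (ha : a ∉ (μ.map w).support) :
    ∃ δ : ℝ≥0, δ ≠ 0 ∧ ∀ᵐ y ∂μ, δ ≤ edist a (w y) := by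
  obtain ⟨V, hV, hV0⟩ := Measure.notMem_support_iff_exists.1 ha
  obtain ⟨ε, hε, hball⟩ := EMetric.mem_nhds_iff.1 hV
  obtain ⟨δ, hδ, hδε⟩ := ENNReal.lt_iff_exists_nnreal_btwn.1 hε
  have hnull : μ (w ⁻¹' Metric.eball a δ) = 0 := by
    rw [← Measure.map_apply_of_aemeasurable hw Metric.isOpen_eball.measurableSet]
    exact measure_mono_null ((Metric.eball_subset_eball hδε.le).trans hball) hV0
  refine ⟨δ, (coe_pos.1 hδ).ne', measure_mono_null (fun y hy ↦ ?_) hnull⟩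
  simpa [edist_comm] using hy

end Support

section Gagliardo

variable {m : ℕ} {s p : ℝ}

section EMetric

variable {X : Type*} [PseudoEMetricSpace X] {w : EuclideanSpace ℝ (Fin m) → X}

lemma gagliardoIntegral_mono (s p : ℝ) (w : EuclideanSpace ℝ (Fin m) → X) :
    Monotone fun A ↦ gagliardoIntegral s p A w :=
  fun _ _ h ↦ (lintegral_mono fun _ ↦ lintegral_mono_set h).trans (lintegral_mono_set h)

variable [MeasurableSpace X] [OpensMeasurableSpace X] {U : Set (EuclideanSpace ℝ (Fin m))}

lemma setLIntegral_edist_rpow_div_eq_top_of_notMem_support (hp : 0 ≤ p) (hsp : 0 < s * p)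
    (hU : IsOpen U) (hw : AEMeasurable w (volume.restrict U)) {x : EuclideanSpace ℝ (Fin m)}
    (hx : x ∈ U) (hwx : w x ∉ ((volume.restrict U).map w).support) :
    ∫⁻ y in U, edist (w x) (w y) ^ p / edist x y ^ ((m : ℝ) + s * p) = ∞ := by
  obtain ⟨δ, hδ, hδw⟩ := exists_ae_le_edist_of_notMem_support_map hw hwx
  have hδp : (δ : ℝ≥0∞) ^ p ≠ 0 := by positivity
  refine top_le_iff.1 ?_
  calc ∞ = (δ : ℝ≥0∞) ^ p * ∫⁻ y in U, (edist x y ^ ((m : ℝ) + s * p))⁻¹ := by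
        rw [setLIntegral_inv_edist_rpow_eq_top (by simpa using hsp) (hU.mem_nhds hx),
          ENNReal.mul_top hδp]
    _ = ∫⁻ y in U, (δ : ℝ≥0∞) ^ p / edist x y ^ ((m : ℝ) + s * p) := by
        simp only [div_eq_mul_inv]
        exact (lintegral_const_mul' _ _ (ENNReal.rpow_ne_top_of_nonneg hp coe_ne_top)).symm
    _ ≤ _ := lintegral_mono_ae <| hδw.mono fun y hy ↦ by gcongr

lemma ae_mem_support_map_of_gagliardoIntegral_lt_top (hp : 0 ≤ p) (hsp : 0 < s * p)
    (hU : IsOpen U) (hw : AEMeasurable w (volume.restrict U))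
    (hfin : gagliardoIntegral s p U w < ∞) :
    ∀ᵐ x ∂volume.restrict U, w x ∈ ((volume.restrict U).map w).support := by
  set S := w ⁻¹' ((volume.restrict U).map w).supportᶜ
  have hS : NullMeasurableSet S (volume.restrict U) :=
    hw.nullMeasurable Measure.isOpen_compl_support.measurableSet
  have htop : ∞ * volume.restrict U S ≤ gagliardoIntegral s p U w := by
    rw [← lintegral_indicator_const₀ hS]
    refine lintegral_mono_ae ?_
    filter_upwards [ae_restrict_mem hU.measurableSet] with x hx
    exact indicator_apply_le' (fun hxS ↦
      (setLIntegral_edist_rpow_div_eq_top_of_notMem_support hp hsp hU hw hx hxS).ge)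
      fun _ ↦ zero_le
  exact of_not_not fun hne ↦ (htop.trans_lt hfin).ne (ENNReal.top_mul hne)

end EMetric

section Metric

variable {X : Type*} [PseudoMetricSpace X] {A B D : Set (EuclideanSpace ℝ (Fin m))}

theorem aestronglyMeasurable_of_gagliardoIntegral_lt_top [MeasurableSpace X] [BorelSpace X]
    (hp : 0 ≤ p) (hsp : 0 < s * p) (hD : IsOpen D) {w : EuclideanSpace ℝ (Fin m) → X}
    (hw : AEMeasurable w (volume.restrict D)) (hfin : gagliardoIntegral s p D w < ∞) :
    AEStronglyMeasurable w (volume.restrict D) :=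
  aestronglyMeasurable_iff_aemeasurable_separable.2 ⟨hw, _, isSeparable_support _,
    ae_mem_support_map_of_gagliardoIntegral_lt_top hp hsp hD hw hfin⟩

lemma aemeasurable_edist_prod_s12 {α : Type*} [MeasurableSpace α] {μ ν : Measure α} [SFinite ν]
    {w : α → X} (hμ : AEStronglyMeasurable w μ) (hν : AEStronglyMeasurable w ν) :
    AEMeasurable (fun z : α × α ↦ edist (w z.1) (w z.2)) (μ.prod ν) :=
  hμ.comp_fst.edist hν.comp_snd

lemma gagliardoIntegral_eq_lintegral_rieszPairMeasure {w : EuclideanSpace ℝ (Fin m) → X}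
    (hw : AEStronglyMeasurable w (volume.restrict D)) :
    gagliardoIntegral s p D w =
      ∫⁻ z in D ×ˢ D, edist (w z.1) (w z.2) ^ p ∂rieszPairMeasure volume (m + s * p) := by
  have hwp := (aemeasurable_edist_prod_s12 hw hw).pow_const p
  have hk := measurable_inv_edist_rpow (X := EuclideanSpace ℝ (Fin m)) (m + s * p)
  rw [rieszPairMeasure, restrict_withDensity', ← Measure.prod_restrict,
    lintegral_withDensity_eq_lintegral_mul₀ hk.aemeasurable hwp,
    lintegral_prod _ (hk.aemeasurable.mul hwp)]
  simp only [gagliardoIntegral, Pi.mul_apply, div_eq_mul_inv, mul_comm]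

/-- The triangle inequality through the common value `u x = v x` makes one of `u`, `v` jump by at
least `ρ / 2` between `x` and `y`. -/
lemma rpow_half_le_edist_rpow_add {ρ : ℝ≥0∞} (hp : 0 ≤ p) {a a' b b' : X} (h : a = b)
    (h' : ρ ≤ edist a' b') : (ρ / 2) ^ p ≤ edist a a' ^ p + edist b b' ^ p := by
  subst h
  rcases le_or_gt (ρ / 2) (edist a a') with hle | hlt
  · exact le_add_right (by gcongr)
  · refine le_add_left (rpow_le_rpow ?_ hp)
    by_contra! hlt'
    refine (h'.trans (edist_triangle_left _ _ a)).not_gt ?_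
    exact (ENNReal.add_lt_add hlt hlt').trans_eq (ENNReal.add_halves ρ)

theorem rpow_half_mul_rieszPairMeasure_prod_le {ρ : ℝ≥0∞} (hp : 0 ≤ p)
    {u v : EuclideanSpace ℝ (Fin m) → X} (hu : AEStronglyMeasurable u (volume.restrict D))
    (hv : AEStronglyMeasurable v (volume.restrict D)) (hAD : A ⊆ D) (hBD : B ⊆ D)
    (hA : ∀ᵐ x ∂volume.restrict A, u x = v x)
    (hB : ∀ᵐ x ∂volume.restrict B, ρ ≤ edist (u x) (v x)) :
    (ρ / 2) ^ p * rieszPairMeasure volume (m + s * p) (A ×ˢ B) ≤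
      gagliardoIntegral s p D u + gagliardoIntegral s p D v := by
  set ν : Measure (EuclideanSpace ℝ (Fin m) × EuclideanSpace ℝ (Fin m)) :=
    rieszPairMeasure volume (m + s * p)
  have hjump : ∀ᵐ z ∂ν.restrict (A ×ˢ B), (ρ / 2) ^ p ≤
      edist (u z.1) (u z.2) ^ p + edist (v z.1) (v z.2) ^ p := by
    refine (restrict_rieszPairMeasure_absolutelyContinuous _ _ _ _).ae_le ?_
    filter_upwards [Measure.quasiMeasurePreserving_fst.ae hA,
      Measure.quasiMeasurePreserving_snd.ae hB] with z hz hz'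
    exact rpow_half_le_edist_rpow_add hp hz hz'
  calc (ρ / 2) ^ p * ν (A ×ˢ B)
      = ∫⁻ _ in A ×ˢ B, (ρ / 2) ^ p ∂ν := (setLIntegral_const _ _).symm
    _ ≤ ∫⁻ z in A ×ˢ B, edist (u z.1) (u z.2) ^ p + edist (v z.1) (v z.2) ^ p ∂ν :=
        lintegral_mono_ae hjump
    _ ≤ ∫⁻ z in D ×ˢ D, edist (u z.1) (u z.2) ^ p + edist (v z.1) (v z.2) ^ p ∂ν :=
        lintegral_mono_set (prod_mono hAD hBD)
    _ = gagliardoIntegral s p D u + gagliardoIntegral s p D v := by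
        rw [gagliardoIntegral_eq_lintegral_rieszPairMeasure hu,
          gagliardoIntegral_eq_lintegral_rieszPairMeasure hv]
        exact lintegral_add_left' (((aemeasurable_edist_prod_s12 hu hu).pow_const p).mono_ac
          (restrict_rieszPairMeasure_absolutelyContinuous _ _ _ _)) _

end Metric

theorem ae_eq_or_ae_ne_of_gagliardoIntegral_ne_top (hp : 0 ≤ p) (hsp : 1 ≤ s * p)
    {X : Type*} [MetricSpace X] {D : Set (EuclideanSpace ℝ (Fin m))} (hD : MeasurableSet D)
    (hconv : Convex ℝ D) {u v : EuclideanSpace ℝ (Fin m) → X}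
    (hu : AEStronglyMeasurable u (volume.restrict D))
    (hv : AEStronglyMeasurable v (volume.restrict D))
    (hfu : gagliardoIntegral s p D u ≠ ∞) (hfv : gagliardoIntegral s p D v ≠ ∞) {ρ : ℝ≥0∞}
    (hρ : ρ ≠ 0) (hsep : ∀ᵐ x ∂volume.restrict D, u x = v x ∨ ρ ≤ edist (u x) (v x)) :
    (∀ᵐ x ∂volume.restrict D, u x = v x) ∨ (∀ᵐ x ∂volume.restrict D, u x ≠ v x) := by
  obtain ⟨C, -, hC, hCuv⟩ :=
    (hu.nullMeasurableSet_eq_fun hv).exists_measurable_superset_ae_eq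
  replace hCuv : ∀ᵐ x ∂volume.restrict D, x ∈ C ↔ u x = v x := hCuv.mem_iff
  have hA : ∀ᵐ x ∂volume.restrict (D ∩ C), u x = v x := by
    filter_upwards [ae_restrict_of_ae_restrict_of_subset inter_subset_left hCuv,
      ae_restrict_mem (hD.inter hC)] with x hx hxC using hx.1 hxC.2
  have hB : ∀ᵐ x ∂volume.restrict (D \ C), ρ ≤ edist (u x) (v x) := by
    filter_upwards [ae_restrict_of_ae_restrict_of_subset sdiff_subset (hCuv.and hsep),
      ae_restrict_mem (hD.diff hC)] with x hx hxC using hx.2.resolve_left (hxC.2 ∘ hx.1.2)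
  have hfin : rieszPairMeasure volume (m + s * p) ((D ∩ C) ×ˢ (D \ C)) ≠ ∞ := by
    intro htop
    have hle := rpow_half_mul_rieszPairMeasure_prod_le (s := s) hp hu hv inter_subset_left
      sdiff_subset hA hB
    have hρp : (ρ / 2) ^ p ≠ 0 := by simp [ENNReal.rpow_eq_zero_iff, hρ, hp.not_gt]
    rw [htop, ENNReal.mul_top hρp, top_le_iff] at hle
    exact ENNReal.add_ne_top.2 ⟨hfu, hfv⟩ hle
  rcases measure_eq_zero_or_of_rieszPairMeasure_prod_ne_top (by simpa using hsp)
    (hD.inter hC) (hD.diff hC) disjoint_sdiff_inter.symm (by rwa [inter_union_sdiff]) hfin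
    with hnull | hnull
  · right
    filter_upwards [hCuv, (measure_eq_zero_iff_ae_notMem.1 hnull).filter_mono ae_restrict_le,
      ae_restrict_mem hD] with x hx hxC hxD using fun h ↦ hxC ⟨hxD, hx.2 h⟩
  · left
    filter_upwards [hCuv, (measure_eq_zero_iff_ae_notMem.1 hnull).filter_mono ae_restrict_le,
      ae_restrict_mem hD] with x hx hxC hxD using hx.1 (by_contra fun h ↦ hxC ⟨hxD, h⟩)

lemma MemWsplocOn.eventually_ball {X : Type*} [PseudoEMetricSpace X]
    {Ω : Set (EuclideanSpace ℝ (Fin m))} {w : EuclideanSpace ℝ (Fin m) → X}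
    (hw : MemWsplocOn s p Ω w) {x : EuclideanSpace ℝ (Fin m)} (hx : x ∈ Ω) :
    ∀ᶠ r in 𝓝[>] 0, Metric.ball x r ⊆ Ω ∧ gagliardoIntegral s p (Metric.ball x r) w < ∞ := by
  obtain ⟨U, hU, hxU, hUΩ, hfin⟩ := hw x hx
  obtain ⟨R, hR, hball⟩ := Metric.isOpen_iff.1 hU x hxU
  filter_upwards [Ioo_mem_nhdsGT hR] with r hr
  have hrU : Metric.ball x r ⊆ U := (Metric.ball_subset_ball hr.2.le).trans hball
  exact ⟨hrU.trans hUΩ, (gagliardoIntegral_mono s p w hrU).trans_lt hfin⟩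

end Gagliardo

section LocallyAE

variable {X : Type*} [TopologicalSpace X] [MeasurableSpace X] {μ : Measure X} {P : X → Prop}

lemma eventually_nhds_inf_ae_iff {x : X} :
    (∀ᶠ y in 𝓝 x ⊓ ae μ, P y) ↔ ∃ U ∈ 𝓝 x, ∀ᵐ y ∂μ, y ∈ U → P y := by
  refine eventually_inf.trans ⟨?_, ?_⟩
  · rintro ⟨U, hU, T, hT, h⟩
    exact ⟨U, hU, mem_of_superset hT fun y hy hyU ↦ h y ⟨hyU, hy⟩⟩
  · rintro ⟨U, hU, h⟩
    exact ⟨U, hU, _, h, fun y hy ↦ hy.2 hy.1⟩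

lemma eventually_nhds_inf_ae_of_ae_restrict {x : X} {U : Set X} (hU : U ∈ 𝓝 x)
    (h : ∀ᵐ y ∂μ.restrict U, P y) : ∀ᶠ y in 𝓝 x ⊓ ae μ, P y :=
  eventually_nhds_inf_ae_iff.2 ⟨U, hU, ae_imp_of_ae_restrict h⟩

instance nhds_inf_ae_neBot [μ.IsOpenPosMeasure] (x : X) : (𝓝 x ⊓ ae μ).NeBot :=
  inf_neBot_iff.2 fun _ hU _ hT ↦ by_contra fun h ↦ (μ.measure_pos_of_mem_nhds hU).ne'
    (measure_mono_null (fun y hy hyT ↦ h ⟨y, hy, hyT⟩) hT)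

lemma isOpen_setOf_eventually_nhds_inf_ae : IsOpen {x | ∀ᶠ y in 𝓝 x ⊓ ae μ, P y} := by
  refine isOpen_iff_mem_nhds.2 fun x hx ↦ ?_
  obtain ⟨U, hU, h⟩ := eventually_nhds_inf_ae_iff.1 hx
  filter_upwards [eventually_mem_nhds_iff.2 hU] with y hy
  exact eventually_nhds_inf_ae_iff.2 ⟨U, hy, h⟩

lemma ae_restrict_of_forall_eventually_nhds_inf_ae [SecondCountableTopology X] {Ω : Set X}
    (hΩ : MeasurableSet Ω) (h : ∀ x ∈ Ω, ∀ᶠ y in 𝓝 x ⊓ ae μ, P y) :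
    ∀ᵐ x ∂μ.restrict Ω, P x := by
  rw [ae_restrict_iff' hΩ]
  refine measure_null_of_locally_null _ fun x hx ↦ ?_
  obtain ⟨hxΩ, -⟩ := Classical.not_imp.1 hx
  obtain ⟨U, hU, hP⟩ := eventually_nhds_inf_ae_iff.1 (h x hxΩ)
  refine ⟨_, inter_mem self_mem_nhdsWithin (mem_nhdsWithin_of_mem_nhds hU),
    measure_mono_null ?_ (ae_iff.1 hP)⟩
  exact fun _ hy hP' ↦ hy.1 fun _ ↦ hP' hy.2

theorem ae_or_ae_not_of_isPreconnected [SecondCountableTopology X] [μ.IsOpenPosMeasure] {Ω : Set X}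
    (hΩ : IsPreconnected Ω) (hΩm : MeasurableSet Ω)
    (h : ∀ x ∈ Ω, (∀ᶠ y in 𝓝 x ⊓ ae μ, P y) ∨ (∀ᶠ y in 𝓝 x ⊓ ae μ, ¬P y)) :
    (∀ᵐ x ∂μ.restrict Ω, P x) ∨ (∀ᵐ x ∂μ.restrict Ω, ¬P x) := by
  have hdisj : Disjoint {x | ∀ᶠ y in 𝓝 x ⊓ ae μ, P y} {x | ∀ᶠ y in 𝓝 x ⊓ ae μ, ¬P y} := by
    refine disjoint_left.2 fun x (hP : ∀ᶠ y in 𝓝 x ⊓ ae μ, P y) hnP ↦ ?_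
    obtain ⟨y, hy, hny⟩ := (hP.and hnP).exists
    exact hny hy
  exact (hΩ.subset_or_subset isOpen_setOf_eventually_nhds_inf_ae
    isOpen_setOf_eventually_nhds_inf_ae hdisj h).imp
      (ae_restrict_of_forall_eventually_nhds_inf_ae hΩm)
      (ae_restrict_of_forall_eventually_nhds_inf_ae hΩm)

end LocallyAE

theorem lifting_uniqueness_dichotomy_general {s p : ℝ} {m : ℕ} (hp : 0 ≤ p) (hsp : 1 ≤ s * p)
    {Ntl : Type*} {N : Type*} [MetricSpace Ntl] [MeasurableSpace Ntl] [BorelSpace Ntl]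
    {π : Ntl → N} {ρ : ℝ} (hρ : 0 < ρ) (hinj : ∀ a b, dist a b ≤ ρ → π a = π b → a = b)
    {Ω : Set (EuclideanSpace ℝ (Fin m))} (hΩo : IsOpen Ω) (hΩc : IsPreconnected Ω)
    {u v : EuclideanSpace ℝ (Fin m) → Ntl} (hu : AEMeasurable u (volume.restrict Ω))
    (hv : AEMeasurable v (volume.restrict Ω)) (huloc : MemWsplocOn s p Ω u)
    (hvloc : MemWsplocOn s p Ω v) (hπ : ∀ᵐ x ∂volume.restrict Ω, π (u x) = π (v x)) :
    (∀ᵐ x ∂volume.restrict Ω, u x = v x) ∨ (∀ᵐ x ∂volume.restrict Ω, u x ≠ v x) := by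
  have hsep : ∀ᵐ x ∂volume.restrict Ω, u x = v x ∨ ENNReal.ofReal ρ ≤ edist (u x) (v x) := by
    filter_upwards [hπ] with x hx
    refine (le_total (dist (u x) (v x)) ρ).imp (fun h ↦ hinj _ _ h hx) fun h ↦ ?_
    exact (ofReal_le_ofReal h).trans_eq (edist_dist _ _).symm
  refine ae_or_ae_not_of_isPreconnected hΩc hΩo.measurableSet fun x hx ↦ ?_
  obtain ⟨r, ⟨⟨hball, hfu⟩, -, hfv⟩, hr⟩ :=
    (((huloc.eventually_ball hx).and (hvloc.eventually_ball hx)).and self_mem_nhdsWithin).exists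
  have hsp0 : 0 < s * p := one_pos.trans_le hsp
  have hus := aestronglyMeasurable_of_gagliardoIntegral_lt_top hp hsp0 Metric.isOpen_ball
    (hu.mono_set hball) hfu
  have hvs := aestronglyMeasurable_of_gagliardoIntegral_lt_top hp hsp0 Metric.isOpen_ball
    (hv.mono_set hball) hfv
  exact (ae_eq_or_ae_ne_of_gagliardoIntegral_ne_top hp hsp measurableSet_ball (convex_ball x r)
    hus hvs hfu.ne hfv.ne (ofReal_pos.2 hρ).ne'
    (ae_restrict_of_ae_restrict_of_subset hball hsep)).imp
      (eventually_nhds_inf_ae_of_ae_restrict (Metric.ball_mem_nhds x hr))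
      (eventually_nhds_inf_ae_of_ae_restrict (Metric.ball_mem_nhds x hr))

/-- **Uniqueness of liftings (dichotomy).** For `sp ≥ 1`, if `π : Ñ → N` is nonexpansive and
an isometry at scale `ρ > 0`, `Ω ⊆ ℝ^m` is a connected open set and `ũ, ṽ ∈ W^{s,p}_loc(Ω,Ñ)`
are Borel measurable with `π ∘ ũ = π ∘ ṽ` a.e. on `Ω`, then either `ũ = ṽ` a.e. on `Ω` or
`ũ ≠ ṽ` a.e. on `Ω`. -/
theorem lifting_uniqueness_dichotomy (s p : ℝ) (m : ℕ) (hs0 : 0 < s) (hs1 : s < 1)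
    (hp1 : 1 ≤ p) (hsp : 1 ≤ s * p) (hm : 1 ≤ m)
    {Ntl N : Type*} [MetricSpace Ntl] [MetricSpace N]
    [MeasurableSpace Ntl] [BorelSpace Ntl]
    (π : Ntl → N) (ρ : ℝ) (hρ : 0 < ρ)
    (hnonexp : ∀ a b : Ntl, dist (π a) (π b) ≤ dist a b)
    (hiso : ∀ a b : Ntl, dist a b ≤ ρ → dist (π a) (π b) = dist a b)
    (Ω : Set (EuclideanSpace ℝ (Fin m))) (hΩo : IsOpen Ω) (hΩc : IsConnected Ω)
    (ut vt : EuclideanSpace ℝ (Fin m) → Ntl) (hutm : Measurable ut) (hvtm : Measurable vt)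
    (hutloc : MemWsplocOn s p Ω ut) (hvtloc : MemWsplocOn s p Ω vt)
    (hπ : ∀ᵐ x ∂(volume.restrict Ω), π (ut x) = π (vt x)) :
    (∀ᵐ x ∂(volume.restrict Ω), ut x = vt x) ∨
      (∀ᵐ x ∂(volume.restrict Ω), ut x ≠ vt x) :=
  lifting_uniqueness_dichotomy_general (zero_le_one.trans hp1) hsp hρ
    (fun a b hab h ↦ dist_eq_zero.1 (by rw [← hiso a b hab, h, dist_self])) hΩo
    hΩc.isPreconnected hutm.aemeasurable hvtm.aemeasurable hutloc hvtloc hπ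
end
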